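/- arXiv:1911.01061 — 14 statements merged into one kernel-verified Lean document; each statement's English description precedes it below -/
import Mathlib

section
/- Let d ∈ ℝ^n have all entries strictly positive and let x, y ∈ ℝ^n. Then x ≺_d y if and only if for every continuous convex function ψ : ℝ → ℝ one has Σ_{j=1}^n d_j·ψ(x_j/d_j) ≤ Σ_{j=1}^n d_j·ψ(y_j/d_j). -/
/-- A matrix is `d`-stochastic if it has nonnegative entries, each column sums to one,
and it fixes the vector `d`. -/
def IsDStochastic {n : ℕ} (d : Fin n → ℝ) (A : Matrix (Fin n) (Fin n) ℝ) : Prop :=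
  (∀ i j, 0 ≤ A i j) ∧ (∀ j, ∑ i, A i j = 1) ∧ A.mulVec d = d

/-- `x` is `d`-majorized by `y` if some `d`-stochastic matrix maps `y` to `x`. -/
def DMaj {n : ℕ} (d x y : Fin n → ℝ) : Prop :=
  ∃ A : Matrix (Fin n) (Fin n) ℝ, IsDStochastic d A ∧ x = A.mulVec y

theorem easy_dir {n : ℕ} (d x y : Fin n → ℝ) (hd : ∀ i, 0 < d i) (h : DMaj d x y)
    (ψ : ℝ → ℝ) (hψ : ConvexOn ℝ Set.univ ψ) :
    ∑ j, d j * ψ (x j / d j) ≤ ∑ j, d j * ψ (y j / d j) := by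
  obtain ⟨A, ⟨hA0, hA1, hAd⟩, rfl⟩ := h
  have hrow : ∀ i, ∑ j, A i j * d j = d i := fun i => congrFun hAd i
  have key : ∀ i, d i * ψ (A.mulVec y i / d i) ≤ ∑ j, A i j * (d j * ψ (y j / d j)) := by
    intro i
    have hne := (hd i).ne'
    have hJ := hψ.map_sum_le (t := Finset.univ) (w := fun j => A i j * d j / d i)
      (p := fun j => y j / d j)
      (fun j _ => div_nonneg (mul_nonneg (hA0 i j) (hd j).le) (hd i).le)
      (by rw [← Finset.sum_div, hrow, div_self hne]) (fun _ _ => Set.mem_univ _)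
    have e : ∑ j, (A i j * d j / d i) • (y j / d j) = A.mulVec y i / d i := by
      simp only [Matrix.mulVec, dotProduct, Finset.sum_div, smul_eq_mul]
      refine Finset.sum_congr rfl fun j _ => ?_
      have := (hd j).ne'
      field_simp
    rw [e] at hJ
    calc d i * ψ (A.mulVec y i / d i)
        ≤ d i * ∑ j, (A i j * d j / d i) • ψ (y j / d j) :=
          mul_le_mul_of_nonneg_left hJ (hd i).le
      _ = _ := by
          rw [Finset.mul_sum]
          refine Finset.sum_congr rfl fun j _ => ?_
          rw [smul_eq_mul]
          field_simp
  calc _ ≤ ∑ i, ∑ j, A i j * (d j * ψ (y j / d j)) := Finset.sum_le_sum fun i _ => key i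
    _ = _ := by
      rw [Finset.sum_comm]
      refine Finset.sum_congr rfl fun j _ => ?_
      rw [← Finset.sum_mul, hA1, one_mul]

/-- The linear map sending (the transpose of) a matrix to the pair `(A d, A y)`. -/
def pairMap {n : ℕ} (d y : Fin n → ℝ) :
    (Fin n → Fin n → ℝ) →ₗ[ℝ] (Fin n → ℝ) × (Fin n → ℝ) where
  toFun T := (fun i => ∑ j, T j i * d j, fun i => ∑ j, T j i * y j)
  map_add' S T := by
    ext i <;> simp [add_mul, Finset.sum_add_distrib]
  map_smul' r T := by
    ext i <;> simp [mul_assoc, Finset.mul_sum]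

theorem hard_dir {n : ℕ} (d x y : Fin n → ℝ) (hd : ∀ i, 0 < d i)
    (h : ∀ ψ : ℝ → ℝ, Continuous ψ → ConvexOn ℝ Set.univ ψ →
        ∑ j, d j * ψ (x j / d j) ≤ ∑ j, d j * ψ (y j / d j)) : DMaj d x y := by
  rcases Nat.eq_zero_or_pos n with rfl | hn
  · exact ⟨0, ⟨fun i => i.elim0, fun i => i.elim0, funext fun i => i.elim0⟩,
      funext fun i => i.elim0⟩
  have : Nonempty (Fin n) := ⟨⟨0, hn⟩⟩
  let S : Set (Fin n → Fin n → ℝ) := Set.pi Set.univ fun _ => stdSimplex ℝ (Fin n)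
  have hSc : IsCompact S := isCompact_univ_pi fun _ => isCompact_stdSimplex ℝ (Fin n)
  have hSv : Convex ℝ S := convex_pi fun _ _ => convex_stdSimplex ℝ (Fin n)
  have hcont : Continuous (pairMap d y) := LinearMap.continuous_of_finiteDimensional _
  by_cases hmem : (d, x) ∈ pairMap d y '' S
  · obtain ⟨T, hT, hTe⟩ := hmem
    have hT' : ∀ j, T j ∈ stdSimplex ℝ (Fin n) := fun j => hT j (Set.mem_univ j)
    refine ⟨fun i j => T j i, ⟨fun i j => (hT' j).1 i, fun j => (hT' j).2, ?_⟩, ?_⟩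
    · exact congrArg Prod.fst hTe
    · exact (congrArg Prod.snd hTe).symm
  exfalso
  obtain ⟨f, u, hf1, hf2⟩ := geometric_hahn_banach_closed_point
    (hSv.linear_image (pairMap d y)) (hSc.image hcont).isClosed hmem
  let a : Fin n → ℝ := fun i => f (Pi.single i 1, 0)
  let c : Fin n → ℝ := fun i => f (0, Pi.single i 1)
  have hf : ∀ p q : Fin n → ℝ, f (p, q) = ∑ i, (p i * a i + q i * c i) := by
    intro p q
    have e : (p, q) = ∑ i, (p i • ((Pi.single i 1, 0) : (Fin n → ℝ) × (Fin n → ℝ))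
        + q i • ((0, Pi.single i 1) : (Fin n → ℝ) × (Fin n → ℝ))) := by
      ext k <;> simp [Prod.fst_sum, Prod.snd_sum, Finset.sum_apply, Pi.single_apply]
    rw [e, map_sum]
    simp only [map_add, map_smul, smul_eq_mul, a, c]
  let ψ : ℝ → ℝ := fun t => Finset.univ.sup' Finset.univ_nonempty fun i => a i + c i * t
  have hle : ∀ i t, a i + c i * t ≤ ψ t := fun i t =>
    Finset.le_sup' (fun i => a i + c i * t) (Finset.mem_univ i)
  have hψc : Continuous ψ :=
    Continuous.finset_sup'_apply _ fun i _ => by fun_prop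
  have hψv : ConvexOn ℝ Set.univ ψ := by
    refine ⟨convex_univ, fun s _ t _ α β hα hβ hαβ => ?_⟩
    refine Finset.sup'_le _ _ fun i _ => ?_
    have h1 := mul_le_mul_of_nonneg_left (hle i s) hα
    have h2 := mul_le_mul_of_nonneg_left (hle i t) hβ
    simp only [smul_eq_mul]
    have : a i = (α + β) * a i := by rw [hαβ, one_mul]
    nlinarith
  have hmax : ∀ t, ∃ i, ψ t = a i + c i * t := fun t => by
    obtain ⟨i, _, hi⟩ := Finset.exists_mem_eq_sup' (s := Finset.univ) Finset.univ_nonempty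
      (fun i => a i + c i * t)
    exact ⟨i, hi⟩
  choose g hg using hmax
  have hmain := h ψ hψc hψv
  have hlt := hf1 _ ⟨fun j => Pi.single (g (y j / d j)) 1,
    fun j _ => single_mem_stdSimplex ℝ _, rfl⟩
  have e1 : f (pairMap d y fun j => Pi.single (g (y j / d j)) 1)
      = ∑ j, d j * ψ (y j / d j) := by
    show f (_, _) = _
    rw [hf]
    simp only [Finset.sum_mul, ← Finset.sum_add_distrib]
    rw [Finset.sum_comm]
    refine Finset.sum_congr rfl fun j _ => ?_
    rw [Finset.sum_eq_single (g (y j / d j))]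
    · rw [hg (y j / d j)]
      have := (hd j).ne'
      simp only [Pi.single_eq_same]
      field_simp
    · intro i _ hi
      simp [Pi.single_eq_of_ne hi]
    · simp
  rw [e1] at hlt
  rw [hf] at hf2
  have : ∑ i, (d i * a i + x i * c i) ≤ ∑ j, d j * ψ (x j / d j) := by
    refine Finset.sum_le_sum fun i _ => ?_
    have h1 := mul_le_mul_of_nonneg_left (hle i (x i / d i)) (hd i).le
    have e : d i * (a i + c i * (x i / d i)) = d i * a i + x i * c i := by
      have := (hd i).ne'
      field_simp
    linarith
  linarith

theorem stmt0 {n : ℕ} (d x y : Fin n → ℝ) (hd : ∀ i, 0 < d i) :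
    DMaj d x y ↔
      ∀ ψ : ℝ → ℝ, Continuous ψ → ConvexOn ℝ Set.univ ψ →
        ∑ j, d j * ψ (x j / d j) ≤ ∑ j, d j * ψ (y j / d j) :=
  ⟨fun h ψ _ hψ => easy_dir d x y hd h ψ hψ, hard_dir d x y hd⟩
end

section
/- Let d ∈ ℝ^n have all entries strictly positive and let x, y ∈ ℝ^n. Then x ≺_d y if and only if ‖x − t·d‖₁ ≤ ‖y − t·d‖₁ for all t ∈ ℝ. -/
def GoodFn {n : ℕ} (d x y : Fin n → ℝ) (g : ℝ → ℝ) : Prop :=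
  ∑ j, d j * g (x j / d j) ≤ ∑ j, d j * g (y j / d j)

lemma sum_eq_of_l1 {n : ℕ} (d x y : Fin n → ℝ) (hd : ∀ i, 0 < d i)
    (h : ∀ t : ℝ, ∑ j, |x j - t * d j| ≤ ∑ j, |y j - t * d j|) : ∑ j, x j = ∑ j, y j := by
  obtain ⟨t, htx, hty⟩ : ∃ t : ℝ, (∀ j, |x j| ≤ t * d j) ∧ (∀ j, |y j| ≤ t * d j) := by
    refine ⟨∑ j, (|x j| / d j + |y j| / d j), fun j => ?_, fun j => ?_⟩
    all_goals
      have h0 : ∀ i ∈ Finset.univ, 0 ≤ |x i| / d i + |y i| / d i := fun i _ => by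
        have := hd i
        positivity
      have h1 := Finset.single_le_sum h0 (Finset.mem_univ j)
      have hj := hd j
      rw [← div_le_iff₀ hj]
      have h2 : 0 ≤ |x j| / d j := by positivity
      have h3 : 0 ≤ |y j| / d j := by positivity
      linarith
  have a1 := h t
  have a2 := h (-t)
  have e1 : ∀ z : Fin n → ℝ, (∀ j, |z j| ≤ t * d j) →
      ∑ j, |z j - t * d j| = ∑ j, t * d j - ∑ j, z j := by
    intro z hz
    rw [← Finset.sum_sub_distrib]
    refine Finset.sum_congr rfl fun j _ => ?_
    have := abs_le.1 (hz j)
    rw [abs_of_nonpos (by linarith)]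
    ring
  have e2 : ∀ z : Fin n → ℝ, (∀ j, |z j| ≤ t * d j) →
      ∑ j, |z j - (-t) * d j| = ∑ j, t * d j + ∑ j, z j := by
    intro z hz
    rw [← Finset.sum_add_distrib]
    refine Finset.sum_congr rfl fun j _ => ?_
    have := abs_le.1 (hz j)
    rw [abs_of_nonneg (by linarith)]
    ring
  rw [e1 x htx, e1 y hty] at a1
  rw [e2 x htx, e2 y hty] at a2
  linarith

lemma goodFn_affine {n : ℕ} (d x y : Fin n → ℝ) (hd : ∀ i, 0 < d i)
    (h : ∑ j, x j = ∑ j, y j) (α β : ℝ) : GoodFn d x y (fun r => α + β * r) := by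
  have e : ∀ z : Fin n → ℝ, ∑ j, d j * (α + β * (z j / d j)) = ∑ j, d j * α + β * ∑ j, z j := by
    intro z
    rw [Finset.mul_sum, ← Finset.sum_add_distrib]
    refine Finset.sum_congr rfl fun j _ => ?_
    have := (hd j).ne'
    field_simp
  unfold GoodFn
  simp only [e, h, le_refl]

lemma goodFn_abs {n : ℕ} (d x y : Fin n → ℝ) (hd : ∀ i, 0 < d i)
    (h : ∀ t : ℝ, ∑ j, |x j - t * d j| ≤ ∑ j, |y j - t * d j|) (t : ℝ) :
    GoodFn d x y (fun r => |r - t|) := by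
  have e : ∀ z : Fin n → ℝ, ∑ j, d j * |z j / d j - t| = ∑ j, |z j - t * d j| := by
    intro z
    refine Finset.sum_congr rfl fun j _ => ?_
    have hj := hd j
    have : z j - t * d j = d j * (z j / d j - t) := by field_simp
    rw [this, abs_mul, abs_of_pos hj]
  unfold GoodFn
  simp only [e]
  exact h t

lemma GoodFn.add {n : ℕ} {d x y : Fin n → ℝ} {f g : ℝ → ℝ} (hf : GoodFn d x y f)
    (hg : GoodFn d x y g) : GoodFn d x y (fun r => f r + g r) := by
  unfold GoodFn at *
  simp only [mul_add, Finset.sum_add_distrib]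
  linarith

lemma GoodFn.smul {n : ℕ} {d x y : Fin n → ℝ} {f : ℝ → ℝ} (hf : GoodFn d x y f)
    {w : ℝ} (hw : 0 ≤ w) : GoodFn d x y (fun r => w * f r) := by
  unfold GoodFn at *
  simp only [mul_left_comm _ w, ← Finset.mul_sum]
  exact mul_le_mul_of_nonneg_left hf hw

lemma interp {n : ℕ} (d x y : Fin n → ℝ) (hd : ∀ i, 0 < d i)
    (h : ∀ t : ℝ, ∑ j, |x j - t * d j| ≤ ∑ j, |y j - t * d j|)
    (ψ : ℝ → ℝ) (hψ : ∀ a, ∃ α β : ℝ, ψ a = α + β * a ∧ ∀ r, α + β * r ≤ ψ r)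
    (T : Finset ℝ) :
    ∃ g, GoodFn d x y g ∧ (∀ r ∈ T, g r = ψ r) ∧
      ∃ α β : ℝ, ∀ r, (∀ p ∈ T, p ≤ r) → g r = α + β * r ∧ g r ≤ ψ r := by
  have hs := sum_eq_of_l1 d x y hd h
  induction T using Finset.induction_on_max with
  | empty =>
    obtain ⟨α, β, -, h2⟩ := hψ 0
    exact ⟨_, goodFn_affine d x y hd hs α β, by simp, α, β, fun r _ => ⟨rfl, h2 r⟩⟩
  | insert a T ha ih =>
    obtain ⟨α', β', h1, h2⟩ := hψ a
    rcases T.eq_empty_or_nonempty with rfl | hT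
    · exact ⟨_, goodFn_affine d x y hd hs α' β', by simp [h1], α', β', fun r _ => ⟨rfl, h2 r⟩⟩
    obtain ⟨g, hg, hgT, α, β, hαβ⟩ := ih
    obtain ⟨p, hpT, hp⟩ : ∃ p ∈ T, ∀ q ∈ T, q ≤ p :=
      ⟨T.max' hT, T.max'_mem hT, fun q hq => T.le_max' q hq⟩
    have hpa := ha p hpT
    obtain ⟨ga, gale⟩ := hαβ a (fun q hq => (ha q hq).le)
    obtain ⟨gp, -⟩ := hαβ p hp
    have gpψ := hgT p hpT
    set w := (ψ a - g a) / (a - p) with hw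
    have hap : 0 < a - p := by linarith
    have hw0 : 0 ≤ w := div_nonneg (by linarith) hap.le
    have hwa : w * (a - p) = ψ a - g a := by rw [hw]; field_simp
    have hpos : ∀ r, p ≤ r → (-p/2 + 1/2 * r) + 1/2 * |r - p| = r - p := by
      intro r hr
      rw [abs_of_nonneg (by linarith)]; ring
    have hneg : ∀ r, r ≤ p → (-p/2 + 1/2 * r) + 1/2 * |r - p| = 0 := by
      intro r hr
      rw [abs_of_nonpos (by linarith)]; ring
    refine ⟨fun r => g r + w * ((-p/2 + 1/2 * r) + 1/2 * |r - p|),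
      hg.add (((goodFn_affine d x y hd hs (-p/2) (1/2)).add
        ((goodFn_abs d x y hd h p).smul (by norm_num : (0:ℝ) ≤ 1/2))).smul hw0), ?_,
      α - w * p, β + w, ?_⟩
    · intro r hr
      rcases Finset.mem_insert.1 hr with rfl | hr
      · simp only [hpos r hpa.le]; linarith
      · simp only [hneg r (hp r hr), hgT r hr]; ring
    · intro r hr
      have har : a ≤ r := hr a (Finset.mem_insert_self _ _)
      obtain ⟨gr, -⟩ := hαβ r (fun q hq => hr q (Finset.mem_insert_of_mem hq))
      simp only [hpos r (hpa.le.trans har)]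
      refine ⟨by rw [gr]; ring, le_trans ?_ (h2 r)⟩
      have h3 := h2 p
      -- slope comparison
      have hsl : (β + w) * (a - p) ≤ β' * (a - p) := by nlinarith
      have hsl' := le_of_mul_le_mul_right hsl hap
      have := mul_le_mul_of_nonneg_right hsl' (sub_nonneg.2 har)
      nlinarith

lemma goodFn_of_support {n : ℕ} (d x y : Fin n → ℝ) (hd : ∀ i, 0 < d i)
    (h : ∀ t : ℝ, ∑ j, |x j - t * d j| ≤ ∑ j, |y j - t * d j|)
    (ψ : ℝ → ℝ) (hψ : ∀ a, ∃ α β : ℝ, ψ a = α + β * a ∧ ∀ r, α + β * r ≤ ψ r) :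
    GoodFn d x y ψ := by
  obtain ⟨g, hg, hT, -⟩ := interp d x y hd h ψ hψ
    (Finset.univ.image (fun j => x j / d j) ∪ Finset.univ.image (fun j => y j / d j))
  unfold GoodFn at *
  have ex : ∀ j, g (x j / d j) = ψ (x j / d j) := fun j => hT _ (by simp)
  have ey : ∀ j, g (y j / d j) = ψ (y j / d j) := fun j => hT _ (by simp)
  simpa only [ex, ey] using hg

lemma dmaj_of_l1 {n : ℕ} (d x y : Fin n → ℝ) (hd : ∀ i, 0 < d i)
    (h : ∀ t : ℝ, ∑ j, |x j - t * d j| ≤ ∑ j, |y j - t * d j|) : DMaj d x y := by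
  let F : (Fin n → Fin n → ℝ) →ₗ[ℝ] (Fin n → ℝ) × (Fin n → ℝ) :=
    { toFun := fun B => (fun i => ∑ j, B j i * d j, fun i => ∑ j, B j i * y j)
      map_add' := by
        intro B C
        ext i <;> simp [add_mul, Finset.sum_add_distrib]
      map_smul' := by
        intro c B
        ext i <;> simp [mul_assoc, Finset.mul_sum] }
  let K : Set (Fin n → Fin n → ℝ) := Set.pi Set.univ (fun _ => stdSimplex ℝ (Fin n))
  have hKc : IsCompact K := isCompact_univ_pi fun _ => isCompact_stdSimplex ℝ (Fin n)
  have hKv : Convex ℝ K := convex_pi fun _ _ => convex_stdSimplex ℝ (Fin n)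
  by_cases hmem : (d, x) ∈ F '' K
  · obtain ⟨B, hB, hF⟩ := hmem
    have h1 : (fun i => ∑ j, B j i * d j) = d := congrArg Prod.fst hF
    have h2 : (fun i => ∑ j, B j i * y j) = x := congrArg Prod.snd hF
    refine ⟨fun i j => B j i, ⟨fun i j => (hB j trivial).1 i, fun j => (hB j trivial).2, ?_⟩, ?_⟩
    · exact h1
    · exact h2.symm
  exfalso
  have hFc : IsCompact (F '' K) := hKc.image F.continuous_of_finiteDimensional
  obtain ⟨f, u, hfu, huf⟩ := geometric_hahn_banach_closed_point
    (hKv.linear_image F) hFc.isClosed hmem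
  obtain ⟨b, c, hbc⟩ : ∃ b c : Fin n → ℝ, ∀ v w : Fin n → ℝ,
      f (v, w) = ∑ i, v i * b i + ∑ i, w i * c i := by
    refine ⟨fun i => f (fun j => if i = j then 1 else 0, 0),
      fun i => f (0, fun j => if i = j then 1 else 0), fun v w => ?_⟩
    have e1 := LinearMap.pi_apply_eq_sum_univ (f.toLinearMap ∘ₗ LinearMap.inl ℝ (Fin n → ℝ) (Fin n → ℝ)) v
    have e2 := LinearMap.pi_apply_eq_sum_univ (f.toLinearMap ∘ₗ LinearMap.inr ℝ (Fin n → ℝ) (Fin n → ℝ)) w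
    simp at e1 e2
    rw [← e1, ← e2, ← map_add]
    simp
  rcases isEmpty_or_nonempty (Fin n) with hE | hE
  · have := hfu (F 0) ⟨0, fun j => hE.elim j, rfl⟩
    have e : F 0 = (d, x) := Subsingleton.elim _ _
    rw [e] at this
    linarith
  have hmax : ∀ r : ℝ, ∃ i, ∀ k, b k + c k * r ≤ b i + c i * r := fun r =>
    Finite.exists_max (fun i => b i + c i * r)
  choose σ hσ using hmax
  have hgood := goodFn_of_support d x y hd h (fun r => b (σ r) + c (σ r) * r)
    (fun a => ⟨b (σ a), c (σ a), rfl, fun r => hσ r _⟩)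
  unfold GoodFn at hgood
  have hB := hfu (F fun j => Pi.single (σ (y j / d j)) 1)
    ⟨_, fun j _ => single_mem_stdSimplex ℝ _, rfl⟩
  have eF : f (F fun j => Pi.single (σ (y j / d j)) 1) =
      ∑ j, d j * (b (σ (y j / d j)) + c (σ (y j / d j)) * (y j / d j)) := by
    change f (fun i => ∑ j, (Pi.single (σ (y j / d j)) 1 : Fin n → ℝ) i * d j,
      fun i => ∑ j, (Pi.single (σ (y j / d j)) 1 : Fin n → ℝ) i * y j) = _
    rw [hbc]
    simp only [Finset.sum_mul]
    rw [Finset.sum_comm, Finset.sum_comm (f := fun i j =>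
      (Pi.single (σ (y j / d j)) 1 : Fin n → ℝ) i * y j * c i), ← Finset.sum_add_distrib]
    refine Finset.sum_congr rfl fun j _ => ?_
    have := (hd j).ne'
    simp only [Pi.single_apply, ite_mul, one_mul, zero_mul, Finset.sum_ite_eq', Finset.sum_ite_eq,
      Finset.mem_univ, if_true]
    field_simp
  rw [eF] at hB
  rw [hbc, ← Finset.sum_add_distrib] at huf
  have hle : ∑ i, (d i * b i + x i * c i) ≤
      ∑ j, d j * (b (σ (x j / d j)) + c (σ (x j / d j)) * (x j / d j)) := by
    refine Finset.sum_le_sum fun i _ => ?_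
    have h1 := mul_le_mul_of_nonneg_left (hσ (x i / d i) i) (hd i).le
    have h2 : d i * (b i + c i * (x i / d i)) = d i * b i + x i * c i := by
      have := (hd i).ne'
      field_simp
    linarith
  linarith

lemma l1_of_dmaj {n : ℕ} (d x y : Fin n → ℝ) (h : DMaj d x y) (t : ℝ) :
    ∑ j, |x j - t * d j| ≤ ∑ j, |y j - t * d j| := by
  obtain ⟨A, ⟨h0, h1, h2⟩, rfl⟩ := h
  have key : ∀ i, |A.mulVec y i - t * d i| ≤ ∑ j, A i j * |y j - t * d j| := by
    intro i
    have e : A.mulVec y i - t * d i = ∑ j, A i j * (y j - t * d j) := by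
      have h3 : ∑ j, A i j * d j = d i := congrFun h2 i
      have h4 : A.mulVec y i = ∑ j, A i j * y j := rfl
      rw [h4]
      simp only [mul_sub, Finset.sum_sub_distrib, mul_left_comm _ t, ← Finset.mul_sum, h3]
    rw [e]
    refine (Finset.abs_sum_le_sum_abs _ _).trans (le_of_eq ?_)
    refine Finset.sum_congr rfl fun j _ => ?_
    rw [abs_mul, abs_of_nonneg (h0 i j)]
  refine (Finset.sum_le_sum fun i _ => key i).trans (le_of_eq ?_)
  rw [Finset.sum_comm]
  refine Finset.sum_congr rfl fun j _ => ?_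
  rw [← Finset.sum_mul, h1 j, one_mul]

theorem stmt2 {n : ℕ} (d x y : Fin n → ℝ) (hd : ∀ i, 0 < d i) :
    DMaj d x y ↔
      ∀ t : ℝ, ∑ j, |x j - t * d j| ≤ ∑ j, |y j - t * d j| := by
  exact ⟨fun h t => l1_of_dmaj d x y h t, dmaj_of_l1 d x y hd⟩
end

section
/- Let d ∈ ℝ^n have all entries strictly positive and let x, y ∈ ℝ^n. Then x ≺_d y if and only if Σ_{j=1}^n x_j = Σ_{j=1}^n y_j and for every index i = 1, …, n one has ‖x − (y_i/d_i)·d‖₁ ≤ ‖y − (y_i/d_i)·d‖₁. -/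
theorem interp_aux (P : (ℝ → ℝ) → Prop) (φ : ℝ → ℝ) (hφ : ConvexOn ℝ Set.univ φ)
    (hsub : ∀ m, ∃ a b, (a + b * m = φ m) ∧ ∀ t, a + b * t ≤ φ t)
    (haff : ∀ a b : ℝ, P (fun t => a + b * t)) (s : Finset ℝ) :
    (∀ ψ c m, P ψ → 0 ≤ c → m ∈ s → P (fun t => ψ t + c * max (t - m) 0)) → s.Nonempty →
    ∃ ψ, P ψ ∧ (∀ k ∈ s, ψ k = φ k) ∧ ∃ m ∈ s, (∀ k ∈ s, k ≤ m) ∧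
      (∀ t, (∃ k ∈ s, k ≤ t) → t ≤ m → φ t ≤ ψ t) ∧
      ∃ a b, ∀ t, m ≤ t → ψ t = a + b * t ∧ a + b * t ≤ φ t := by
  induction s using Finset.induction_on_max with
  | empty => intro _ h; simp at h
  | insert q s hq ih =>
    intro hP _
    rcases s.eq_empty_or_nonempty with rfl | hs
    · obtain ⟨a, b, h1, h2⟩ := hsub q
      refine ⟨_, haff a b, ?_, q, by simp, by simp, ?_, a, b, fun t _ => ⟨rfl, h2 t⟩⟩
      · simp [h1]
      · intro t hk ht
        have : t = q := le_antisymm ht (by simpa using hk)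
        subst this; exact h1.ge
    · obtain ⟨ψ, hψ, heq, m, hm, hmax, hge, a, b, hab⟩ :=
        ih (fun ψ c m h1 h2 h3 => hP ψ c m h1 h2 (Finset.mem_insert_of_mem h3)) hs
      have hmq : m < q := hq m hm
      have hpos : 0 < q - m := sub_pos.2 hmq
      set c := (φ q - ψ q) / (q - m) with hc
      have hcm : c * (q - m) = φ q - ψ q := by rw [hc]; field_simp
      have hc0 : 0 ≤ c := by
        apply div_nonneg _ hpos.le
        have := hab q hmq.le
        linarith [this.1, this.2]
      have hψm := (hab m le_rfl).1
      have hψq := (hab q hmq.le).1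
      have hφm := heq m hm
      -- the chord
      have hline : ∀ t, m ≤ t → ψ t + c * max (t - m) 0 = (a - c * m) + (b + c) * t := by
        intro t ht
        rw [(hab t ht).1, max_eq_left (sub_nonneg.2 ht)]; ring
      refine ⟨_, hP ψ c m hψ hc0 (Finset.mem_insert_of_mem hm), ?_, q, by simp, ?_, ?_,
        a - c * m, b + c, ?_⟩
      · intro k hk
        rcases Finset.mem_insert.1 hk with rfl | hk
        · rw [max_eq_left hpos.le]; linarith
        · rw [max_eq_right (sub_nonpos.2 (hmax k hk)), heq k hk]; ring
      · intro k hk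
        rcases Finset.mem_insert.1 hk with rfl | hk
        · exact le_rfl
        · exact (hq k hk).le
      · rintro t ⟨k, hk, hkt⟩ htq
        rcases le_total t m with htm | htm
        · rw [max_eq_right (sub_nonpos.2 htm), mul_zero, add_zero]
          refine hge t ?_ htm
          rcases Finset.mem_insert.1 hk with rfl | hk
          · exact ⟨m, hm, by linarith⟩
          · exact ⟨k, hk, hkt⟩
        · show φ t ≤ ψ t + c * max (t - m) 0
          rw [hline t htm]
          have := hφ.2 (Set.mem_univ m) (Set.mem_univ q)
            (div_nonneg (sub_nonneg.2 htq) hpos.le) (div_nonneg (sub_nonneg.2 htm) hpos.le)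
            (by field_simp; ring)
          simp only [smul_eq_mul] at this
          have e : (q - t) / (q - m) * m + (t - m) / (q - m) * q = t := by field_simp; ring
          rw [e] at this
          refine this.trans (le_of_eq ?_)
          have e1 : φ m = (a - c * m) + (b + c) * m := by linarith
          have e2 : φ q = (a - c * m) + (b + c) * q := by linarith
          rw [e1, e2]; field_simp; ring
      · intro t ht
        refine ⟨hline t (hmq.le.trans ht), ?_⟩
        have htm : 0 < t - m := by linarith
        have := hφ.2 (Set.mem_univ m) (Set.mem_univ t)
            (div_nonneg (sub_nonneg.2 ht) htm.le) (div_nonneg hpos.le htm.le)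
            (by field_simp; ring)
        simp only [smul_eq_mul] at this
        have e : (t - q) / (t - m) * m + (q - m) / (t - m) * t = q := by field_simp; ring
        rw [e] at this
        have e1 : φ m = (a - c * m) + (b + c) * m := by linarith
        have e2 : φ q = (a - c * m) + (b + c) * q := by linarith
        rw [div_mul_eq_mul_div, div_mul_eq_mul_div, ← add_div, le_div_iff₀ htm, e1, e2] at this
        refine le_of_mul_le_mul_left ?_ hpos
        linarith

theorem convex_ineq {n : ℕ} [Nonempty (Fin n)] (d x y : Fin n → ℝ) (hd : ∀ i, 0 < d i)
    (hsum : ∑ j, x j = ∑ j, y j)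
    (h : ∀ i : Fin n, ∑ j, |x j - (y i / d i) * d j| ≤ ∑ j, |y j - (y i / d i) * d j|)
    (φ : ℝ → ℝ) (hφ : ConvexOn ℝ Set.univ φ)
    (hsub : ∀ m, ∃ a b, (a + b * m = φ m) ∧ ∀ t, a + b * t ≤ φ t) :
    ∑ j, d j * φ (x j / d j) ≤ ∑ j, d j * φ (y j / d j) := by
  have key : ∀ (z : Fin n → ℝ) (t : ℝ), ∑ j, d j * max (z j / d j - t) 0 =
      (∑ j, |z j - t * d j| + ∑ j, z j - t * ∑ j, d j) / 2 := by
    intro z t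
    rw [Finset.mul_sum, ← Finset.sum_add_distrib, ← Finset.sum_sub_distrib, Finset.sum_div]
    refine Finset.sum_congr rfl fun j _ => ?_
    have e : z j - t * d j = d j * (z j / d j - t) := by
      have := (hd j).ne'
      field_simp
    have e2 : |z j - t * d j| + z j - t * d j = |z j - t * d j| + (z j - t * d j) := by ring
    rw [e2, e, abs_mul, abs_of_pos (hd j)]
    rcases le_total (z j / d j - t) 0 with h | h
    · rw [max_eq_right h, abs_of_nonpos h]; ring
    · rw [max_eq_left h, abs_of_nonneg h]; ring
  obtain ⟨ψ, hψ, heq, m, hm, hmax, hge, -⟩ := interp_aux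
    (fun ψ => ∑ j, d j * ψ (x j / d j) ≤ ∑ j, d j * ψ (y j / d j)) φ hφ hsub
    (by
      intro a b
      have : ∀ z : Fin n → ℝ, ∑ j, d j * (a + b * (z j / d j)) = a * ∑ j, d j + b * ∑ j, z j := by
        intro z
        rw [Finset.mul_sum, Finset.mul_sum, ← Finset.sum_add_distrib]
        refine Finset.sum_congr rfl fun j _ => ?_
        have := (hd j).ne'
        field_simp
      simp only [this, hsum, le_refl])
    (Finset.univ.image fun i => y i / d i)
    (by
      intro ψ c m hψ hc hm
      obtain ⟨i, -, rfl⟩ := Finset.mem_image.1 hm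
      have e : ∀ z : Fin n → ℝ, ∑ j, d j * (ψ (z j / d j) + c * max (z j / d j - y i / d i) 0) =
          ∑ j, d j * ψ (z j / d j) + c * ∑ j, d j * max (z j / d j - y i / d i) 0 := by
        intro z
        rw [Finset.mul_sum, ← Finset.sum_add_distrib]
        exact Finset.sum_congr rfl fun j _ => by ring
      simp only [e]
      refine add_le_add hψ (mul_le_mul_of_nonneg_left ?_ hc)
      rw [key, key, hsum]
      linarith [h i])
    (Finset.univ_nonempty.image _)
  have hR : ∑ j, d j * ψ (y j / d j) = ∑ j, d j * φ (y j / d j) :=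
    Finset.sum_congr rfl fun j _ => by
      rw [heq _ (Finset.mem_image_of_mem _ (Finset.mem_univ j))]
  rw [← hR]
  refine le_trans (Finset.sum_le_sum fun j _ => mul_le_mul_of_nonneg_left ?_ (hd j).le) hψ
  -- range of `x / d`
  apply hge
  · obtain ⟨i, -, hi⟩ := Finset.exists_min_image Finset.univ (fun i => y i / d i)
      Finset.univ_nonempty
    refine ⟨_, Finset.mem_image_of_mem _ (Finset.mem_univ i), ?_⟩
    have h1 : ∑ k, (|x k - (y i / d i) * d k| - (x k - (y i / d i) * d k)) ≤ 0 := by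
      rw [Finset.sum_sub_distrib]
      have : ∑ k, |y k - (y i / d i) * d k| = ∑ k, (y k - (y i / d i) * d k) :=
        Finset.sum_congr rfl fun k _ => abs_of_nonneg
          (sub_nonneg.2 ((le_div_iff₀ (hd k)).1 (hi k (Finset.mem_univ k))))
      have h' := h i
      rw [this, Finset.sum_sub_distrib] at h'
      rw [Finset.sum_sub_distrib, hsum]
      linarith
    have h2 := (Finset.single_le_sum (f := fun k => |x k - (y i / d i) * d k| -
      (x k - (y i / d i) * d k)) (fun k _ => sub_nonneg.2 (le_abs_self _))
      (Finset.mem_univ j)).trans h1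
    rw [le_div_iff₀ (hd j)]
    have := abs_nonneg (x j - (y i / d i) * d j)
    linarith
  · obtain ⟨i, -, rfl⟩ := Finset.mem_image.1 hm
    have h1 : ∑ k, (|x k - (y i / d i) * d k| + (x k - (y i / d i) * d k)) ≤ 0 := by
      rw [Finset.sum_add_distrib]
      have : ∑ k, |y k - (y i / d i) * d k| = ∑ k, -(y k - (y i / d i) * d k) :=
        Finset.sum_congr rfl fun k _ => abs_of_nonpos
          (sub_nonpos.2 ((div_le_iff₀ (hd k)).1
            (hmax _ (Finset.mem_image_of_mem _ (Finset.mem_univ k)))))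
      have h' := h i
      rw [this, Finset.sum_neg_distrib, Finset.sum_sub_distrib] at h'
      rw [Finset.sum_sub_distrib, hsum]
      linarith
    have h2 := (Finset.single_le_sum (f := fun k => |x k - (y i / d i) * d k| +
      (x k - (y i / d i) * d k)) (fun k _ => by
        have := neg_abs_le (x k - (y i / d i) * d k)
        linarith)
      (Finset.mem_univ j)).trans h1
    rw [div_le_iff₀ (hd j)]
    have := abs_nonneg (x j - (y i / d i) * d j)
    linarith

theorem back {n : ℕ} [Nonempty (Fin n)] (d x y : Fin n → ℝ) (hd : ∀ i, 0 < d i)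
    (hsum : ∑ j, x j = ∑ j, y j)
    (h : ∀ i : Fin n, ∑ j, |x j - (y i / d i) * d j| ≤ ∑ j, |y j - (y i / d i) * d j|) :
    DMaj d x y := by
  let K : Set (Fin n → Fin n → ℝ) := Set.univ.pi fun _ => stdSimplex ℝ (Fin n)
  let T : (Fin n → Fin n → ℝ) →ₗ[ℝ] (Fin n → ℝ) × (Fin n → ℝ) :=
    { toFun := fun M => (fun i => ∑ j, M j i * d j, fun i => ∑ j, M j i * y j)
      map_add' := fun M N => by
        ext i <;> simp [add_mul, Finset.sum_add_distrib]
      map_smul' := fun c M => by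
        ext i <;> simp [mul_assoc, Finset.mul_sum] }
  have hTc : Continuous T := T.continuous_of_finiteDimensional
  have hK : IsCompact K := isCompact_univ_pi fun _ => isCompact_stdSimplex _ _
  have hKc : Convex ℝ K := convex_pi fun _ _ => convex_stdSimplex _ _
  by_cases hmem : (d, x) ∈ T '' K
  · obtain ⟨M, hM, hT⟩ := hmem
    have hM' : ∀ j, M j ∈ stdSimplex ℝ (Fin n) := fun j => hM j (Set.mem_univ j)
    refine ⟨Matrix.of fun i j => M j i, ⟨fun i j => (hM' j).1 i, fun j => (hM' j).2, ?_⟩, ?_⟩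
    · exact congrArg Prod.fst hT
    · exact (congrArg Prod.snd hT).symm
  exfalso
  obtain ⟨f, u, hf1, hf2⟩ := geometric_hahn_banach_closed_point (hKc.linear_image T)
    (hK.image hTc).isClosed hmem
  let b : Fin n → ℝ := fun i => f (Pi.single i 1, 0)
  let c : Fin n → ℝ := fun i => f (0, Pi.single i 1)
  have hf : ∀ v w : Fin n → ℝ, f (v, w) = ∑ i, (b i * v i + c i * w i) := by
    intro v w
    have e : (v, w) = ∑ i, (v i • ((Pi.single i 1, 0) : (Fin n → ℝ) × (Fin n → ℝ)) +
        w i • ((0, Pi.single i 1) : (Fin n → ℝ) × (Fin n → ℝ))) := by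
      ext k <;> simp [Prod.fst_sum, Prod.snd_sum, Finset.sum_apply, Pi.single_apply]
    rw [e, map_sum]
    refine Finset.sum_congr rfl fun i _ => ?_
    rw [map_add, map_smul, map_smul]
    simp only [smul_eq_mul, b, c]; ring
  let φ : ℝ → ℝ := fun t => Finset.univ.sup' Finset.univ_nonempty fun i => b i + c i * t
  have hle : ∀ i t, b i + c i * t ≤ φ t := fun i t =>
    Finset.le_sup' (fun i => b i + c i * t) (Finset.mem_univ i)
  have hex : ∀ t, ∃ i, φ t = b i + c i * t := fun t => by
    obtain ⟨i, -, hi⟩ := Finset.exists_mem_eq_sup' Finset.univ_nonempty fun i => b i + c i * t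
    exact ⟨i, hi⟩
  have hφ : ConvexOn ℝ Set.univ φ := by
    refine ⟨convex_univ, fun s _ t _ α β hα hβ hαβ => ?_⟩
    obtain ⟨i, hi⟩ := hex (α • s + β • t)
    rw [hi]
    simp only [smul_eq_mul]
    have h1 := mul_le_mul_of_nonneg_left (hle i s) hα
    have h2 := mul_le_mul_of_nonneg_left (hle i t) hβ
    have : b i = (α + β) * b i := by rw [hαβ, one_mul]
    nlinarith
  have hmain := convex_ineq d x y hd hsum h φ hφ fun m => by
    obtain ⟨i, hi⟩ := hex m
    exact ⟨b i, c i, hi.symm, hle i⟩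
  choose g hg using hex
  have hA := hf1 _ (Set.mem_image_of_mem T (show (fun j => Pi.single (g (y j / d j)) 1) ∈ K from
    fun j _ => single_mem_stdSimplex ℝ _))
  have e1 : f (T fun j => Pi.single (g (y j / d j)) 1) = ∑ j, d j * φ (y j / d j) := by
    show f (_, _) = _
    rw [hf]
    simp only [Finset.mul_sum, ← Finset.sum_add_distrib]
    rw [Finset.sum_comm]
    refine Finset.sum_congr rfl fun j _ => ?_
    rw [hg, Finset.sum_eq_single (g (y j / d j))]
    · have := (hd j).ne'
      simp; field_simp
    · intro i _ hi
      simp [Pi.single_apply, hi]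
    · simp
  have e2 : f (d, x) ≤ ∑ j, d j * φ (x j / d j) := by
    rw [hf]
    refine Finset.sum_le_sum fun j _ => ?_
    refine le_trans (le_of_eq ?_) (mul_le_mul_of_nonneg_left (hle j (x j / d j)) (hd j).le)
    have := (hd j).ne'
    field_simp
  rw [e1] at hA
  linarith

theorem forw {n : ℕ} (d x y : Fin n → ℝ) (hxy : DMaj d x y) :
    (∑ j, x j = ∑ j, y j) ∧
      ∀ i : Fin n, ∑ j, |x j - (y i / d i) * d j| ≤ ∑ j, |y j - (y i / d i) * d j| := by
  obtain ⟨A, ⟨h0, h1, h2⟩, rfl⟩ := hxy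
  constructor
  · simp only [Matrix.mulVec, dotProduct]
    rw [Finset.sum_comm]
    simp [← Finset.sum_mul, h1]
  · intro i
    generalize y i / d i = t
    have e : ∀ j, A.mulVec y j - t * d j = ∑ k, A j k * (y k - t * d k) := by
      intro j
      have : d j = ∑ k, A j k * d k := (congrFun h2 j).symm
      rw [this, Finset.mul_sum]
      simp only [Matrix.mulVec, dotProduct, ← Finset.sum_sub_distrib]
      exact Finset.sum_congr rfl fun k _ => by ring
    calc ∑ j, |A.mulVec y j - t * d j| ≤ ∑ j, ∑ k, A j k * |y k - t * d k| := by
          refine Finset.sum_le_sum fun j _ => ?_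
          rw [e]
          refine (Finset.abs_sum_le_sum_abs _ _).trans (le_of_eq ?_)
          exact Finset.sum_congr rfl fun k _ => by rw [abs_mul, abs_of_nonneg (h0 j k)]
      _ = ∑ k, |y k - t * d k| := by
          rw [Finset.sum_comm]
          simp [← Finset.sum_mul, h1]

theorem stmt3 {n : ℕ} (d x y : Fin n → ℝ) (hd : ∀ i, 0 < d i) :
    DMaj d x y ↔
      (∑ j, x j = ∑ j, y j) ∧
      ∀ i : Fin n, ∑ j, |x j - (y i / d i) * d j| ≤ ∑ j, |y j - (y i / d i) * d j| := by
  refine ⟨forw d x y, fun h => ?_⟩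
  rcases isEmpty_or_nonempty (Fin n) with hn | hn
  · refine ⟨0, ⟨fun i => hn.elim i, fun i => hn.elim i, ?_⟩, ?_⟩ <;> ext i <;> exact hn.elim i
  · exact back d x y hd h.1 h.2
end

section
/- Let y ∈ ℝ^n have nonnegative entries with y_1 ≤ y_2 ≤ … ≤ y_n, and let d ∈ ℝ^n have strictly positive entries with d_1 ≥ d_2 ≥ … ≥ d_n. Then for every permutation σ of {1,…,n}, the permuted vector (y_{σ(1)}, …, y_{σ(n)}) is d-majorized by y. -/
theorem DMaj.trans' {n : ℕ} {d x y z : Fin n → ℝ} (h1 : DMaj d x y) (h2 : DMaj d y z) :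
    DMaj d x z := by
  obtain ⟨A, ⟨hA0, hA1, hA2⟩, rfl⟩ := h1
  obtain ⟨B, ⟨hB0, hB1, hB2⟩, rfl⟩ := h2
  refine ⟨A * B, ⟨fun i j => ?_, fun j => ?_, ?_⟩, ?_⟩
  · rw [Matrix.mul_apply]
    exact Finset.sum_nonneg fun k _ => mul_nonneg (hA0 i k) (hB0 k j)
  · simp only [Matrix.mul_apply]
    rw [Finset.sum_comm]
    simp only [← Finset.sum_mul, hA1, one_mul, hB1]
  · rw [← Matrix.mulVec_mulVec, hB2, hA2]
  · rw [Matrix.mulVec_mulVec]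

theorem DMaj.refl' {n : ℕ} (d y : Fin n → ℝ) : DMaj d y y := by
  refine ⟨1, ⟨fun i j => ?_, fun j => ?_, ?_⟩, ?_⟩
  · rw [Matrix.one_apply]; split_ifs <;> norm_num
  · simp [Matrix.one_apply]
  · simp
  · simp

theorem dmaj_swap {n : ℕ} (d z : Fin n → ℝ) (hd : ∀ i, 0 < d i) (hz : ∀ i, 0 ≤ z i)
    (i j : Fin n) (hij : i ≠ j) (hdij : d j ≤ d i) (hzij : z i < z j) :
    DMaj d (z ∘ Equiv.swap i j) z := by
  have hdi := hd i
  have hdj := hd j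
  have hzi := hz i
  have hD : 0 < d i * z j - d j * z i := by nlinarith
  obtain ⟨s, hs⟩ : ∃ s, s = (z j - z i) / (d i * z j - d j * z i) := ⟨_, rfl⟩
  have hs0 : 0 ≤ s := by rw [hs]; exact div_nonneg (by linarith) hD.le
  have hs1 : s * (d i * z j - d j * z i) = z j - z i := by
    rw [hs]; exact div_mul_cancel₀ _ hD.ne'
  have hsi : s * d i ≤ 1 := by
    rw [hs, div_mul_eq_mul_div, div_le_one hD]; nlinarith
  have hsj : s * d j ≤ 1 := le_trans (mul_le_mul_of_nonneg_left hdij hs0) hsi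
  have hsi0 : 0 ≤ s * d i := by positivity
  have hsj0 : 0 ≤ s * d j := by positivity
  let u : Fin n → ℝ := Pi.single i 1 - Pi.single j 1
  let w : Fin n → ℝ := Pi.single i (s * d j) - Pi.single j (s * d i)
  have key : ∀ v : Fin n → ℝ, (1 - Matrix.vecMulVec u w).mulVec v
      = fun k => v k - u k * (s * d j * v i - s * d i * v j) := by
    intro v
    have hw : w ⬝ᵥ v = s * d j * v i - s * d i * v j := by
      simp [w, sub_dotProduct]
    ext k
    rw [Matrix.sub_mulVec, Matrix.one_mulVec, Matrix.vecMulVec_mulVec, hw]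
    simp
  refine ⟨1 - Matrix.vecMulVec u w, ⟨fun k l => ?_, fun l => ?_, ?_⟩, ?_⟩
  · simp only [Matrix.sub_apply, Matrix.one_apply, Matrix.vecMulVec_apply, u, w, Pi.sub_apply,
      Pi.single_apply]
    clear key hs hs1 hD
    split_ifs <;> first | linarith | (exfalso; clear u w; simp_all)
  · simp only [Matrix.sub_apply, Matrix.vecMulVec_apply, Finset.sum_sub_distrib,
      ← Finset.sum_mul]
    simp [u, Matrix.one_apply]
  · rw [key]
    ext k
    ring
  · rw [key]
    ext k
    have : s * d j * z i - s * d i * z j = z i - z j := by linarith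
    rw [this]
    simp only [u, Function.comp, Pi.sub_apply, Pi.single_apply, Equiv.swap_apply_def]
    split_ifs with h1 h2 h2
    · exact absurd (h1.symm.trans h2) hij
    · subst h1; ring
    · subst h2; ring
    · ring

theorem stmt6 {n : ℕ} (y d : Fin n → ℝ) (hy0 : ∀ i, 0 ≤ y i) (hy : Monotone y)
    (hd : ∀ i, 0 < d i) (hd' : Antitone d) (σ : Equiv.Perm (Fin n)) :
    DMaj d (fun i => y (σ i)) y := by
  let x : Fin n → ℝ := fun i => y (σ i)
  have h := Tuple.bubble_sort_induction (f := x)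
    (P := fun g => (∀ i, 0 ≤ g i) ∧ (DMaj d g y → DMaj d x y))
    ⟨fun i => hy0 _, id⟩ (by
      rintro g i j hij hg ⟨h0, h1⟩
      refine ⟨fun k => h0 _, fun h2 => h1 (DMaj.trans' ?_ h2)⟩
      have := dmaj_swap d (g ∘ Equiv.swap i j) hd (fun k => h0 _) i j hij.ne (hd' hij.le)
        (by simpa using hg)
      have e : (g ∘ Equiv.swap i j) ∘ Equiv.swap i j = g := by ext k; simp
      rwa [e] at this)
  have e : x ∘ Tuple.sort x = y := by
    have := Tuple.unique_monotone (f := y) (σ := (Tuple.sort x).trans σ) (τ := Equiv.refl _)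
      (Tuple.monotone_sort x) hy
    exact this
  rw [e] at h
  exact h.2 (DMaj.refl' d y)
end

section
/- Let y ∈ ℝ^n have nonnegative entries with y_1 ≤ y_2 ≤ … ≤ y_n. Then for every x ∈ ℝ^n, x is majorized by y if and only if x is d-majorized by y for every d ∈ ℝ^n with strictly positive entries satisfying d_1 ≥ d_2 ≥ … ≥ d_n. -/
/-- Classical majorization: `x ≺ y` iff a doubly stochastic matrix maps `y` to `x`. -/
def Maj {n : ℕ} (x y : Fin n → ℝ) : Prop :=
  ∃ A : Matrix (Fin n) (Fin n) ℝ, (∀ i j, 0 ≤ A i j) ∧ (∀ j, ∑ i, A i j = 1) ∧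
    (∀ i, ∑ j, A i j = 1) ∧ x = A.mulVec y

theorem DMaj.swap' {n : ℕ} {d y : Fin n → ℝ} (hd : ∀ i, 0 < d i) (hda : Antitone d)
    (hy0 : ∀ i, 0 ≤ y i) {i j : Fin n} (hij : i < j) (hlt : y i < y j) :
    DMaj d (y ∘ Equiv.swap i j) y := by
  have hne : i ≠ j := hij.ne
  have hdij := hda hij.le
  have hi := hd i
  have hj := hd j
  have yi := hy0 i
  have yj := hy0 j
  have hD : 0 < y j * d i - y i * d j := by nlinarith
  obtain ⟨s, hs⟩ : ∃ s, s = (y j - y i) / (y j * d i - y i * d j) := ⟨_, rfl⟩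
  have hs0 : 0 ≤ s := by rw [hs]; exact div_nonneg (by linarith) hD.le
  have hsD : s * (y j * d i - y i * d j) = y j - y i := by rw [hs]; field_simp
  have hs1 : s * d i ≤ 1 := by
    rw [hs, div_mul_eq_mul_div, div_le_one hD]; nlinarith
  have hs2 : s * d j ≤ 1 := by
    rw [hs, div_mul_eq_mul_div, div_le_one hD]; nlinarith
  -- the update `1 + s • u vᵀ`
  let u : Fin n → ℝ := Pi.single i 1 - Pi.single j 1
  let v : Fin n → ℝ := d i • Pi.single j 1 - d j • Pi.single i 1
  have hmv : ∀ w : Fin n → ℝ, (1 + s • Matrix.vecMulVec u v).mulVec w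
      = w + (s * (d i * w j - d j * w i)) • u := by
    intro w
    have hvw : v ⬝ᵥ w = d i * w j - d j * w i := by
      simp [v, sub_dotProduct, smul_dotProduct]
    rw [Matrix.add_mulVec, Matrix.one_mulVec, Matrix.smul_mulVec, Matrix.vecMulVec_mulVec, hvw]
    ext k
    simp [mul_assoc, mul_comm]
  refine ⟨1 + s • Matrix.vecMulVec u v, ⟨?_, ?_, ?_⟩, ?_⟩
  · intro k l
    have p1 : 0 ≤ s * d i := by positivity
    have p2 : 0 ≤ s * d j := by positivity
    simp only [Matrix.add_apply, Matrix.one_apply, Matrix.smul_apply, Matrix.vecMulVec_apply, u, v,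
      Pi.sub_apply, Pi.smul_apply, Pi.single_apply, smul_eq_mul]
    by_cases k1 : k = i <;> by_cases k2 : k = j <;> by_cases l1 : l = i <;>
      by_cases l2 : l = j <;> by_cases kl : k = l <;>
      simp_all <;> first | nlinarith | grind
  · intro l
    have hu : ∑ k, u k = 0 := by simp [u, Finset.sum_sub_distrib]
    simp only [Matrix.add_apply, Matrix.smul_apply, Matrix.vecMulVec_apply, Finset.sum_add_distrib,
      ← Finset.smul_sum, ← Finset.sum_mul, hu]
    simp [Matrix.one_apply]
  · rw [hmv]
    simp [mul_comm]
  · rw [hmv]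
    have : s * (d i * y j - d j * y i) = y j - y i := by rw [← hsD]; ring
    rw [this]
    ext k
    by_cases k1 : k = i
    · subst k1; simp [u, hne]
    · by_cases k2 : k = j
      · subst k2; simp [u, hne.symm]
      · simp [u, k1, k2, Equiv.swap_apply_of_ne_of_ne k1 k2]

theorem DMaj.perm' {n : ℕ} {d y : Fin n → ℝ} (hd : ∀ i, 0 < d i) (hda : Antitone d)
    (hy0 : ∀ i, 0 ≤ y i) (hy : Monotone y) (σ : Equiv.Perm (Fin n)) :
    DMaj d (y ∘ σ) y := by
  have key := Tuple.bubble_sort_induction (f := y ∘ σ)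
    (P := fun g => (∀ i, 0 ≤ g i) ∧ DMaj d (y ∘ σ) g)
    ⟨fun i => hy0 _, DMaj.refl' _ _⟩ (by
      intro g i j hij hlt hP
      obtain ⟨h0, h1⟩ := hP
      refine ⟨fun k => h0 _, h1.trans' ?_⟩
      have := DMaj.swap' (y := g ∘ Equiv.swap i j) hd hda (fun k => h0 _) hij (by simpa using hlt)
      convert this using 1
      ext k
      simp)
  have e : (y ∘ σ) ∘ Tuple.sort (y ∘ σ) = y := by
    have h1 := Tuple.comp_perm_comp_sort_eq_comp_sort (f := y) (σ := σ)
    rw [h1, Tuple.sort_eq_refl_iff_monotone.2 hy]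
    rfl
  rw [e] at key
  exact key.2

theorem stmt7 {n : ℕ} (y : Fin n → ℝ) (hy0 : ∀ i, 0 ≤ y i) (hy : Monotone y)
    (x : Fin n → ℝ) :
    Maj x y ↔ ∀ d : Fin n → ℝ, (∀ i, 0 < d i) → Antitone d → DMaj d x y := by
  constructor
  · rintro ⟨A, hA0, hA1, hA2, rfl⟩ d hd hda
    have hA : A ∈ doublyStochastic ℝ (Fin n) := by
      rw [mem_doublyStochastic_iff_sum]
      exact ⟨hA0, hA2, hA1⟩
    obtain ⟨w, hw0, hw1, hw⟩ := exists_eq_sum_perm_of_mem_doublyStochastic hA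
    choose B hB hBy using fun σ : Equiv.Perm (Fin n) => DMaj.perm' hd hda hy0 hy σ
    refine ⟨∑ σ, w σ • B σ, ⟨?_, ?_, ?_⟩, ?_⟩
    · intro i j
      simp only [Matrix.sum_apply, Matrix.smul_apply, smul_eq_mul]
      exact Finset.sum_nonneg fun σ _ => mul_nonneg (hw0 σ) ((hB σ).1 i j)
    · intro j
      simp only [Matrix.sum_apply, Matrix.smul_apply, smul_eq_mul]
      rw [Finset.sum_comm]
      simp only [← Finset.mul_sum, (hB _).2.1, mul_one, hw1]
    · rw [Matrix.sum_mulVec]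
      simp only [Matrix.smul_mulVec, (hB _).2.2]
      rw [← Finset.sum_smul, hw1, one_smul]
    · rw [← hw, Matrix.sum_mulVec, Matrix.sum_mulVec]
      simp only [Matrix.smul_mulVec, ← hBy, Matrix.permMatrix_mulVec]
  · intro h
    obtain ⟨A, ⟨h0, h1, h2⟩, h3⟩ := h (fun _ => 1) (fun _ => one_pos) antitone_const
    refine ⟨A, h0, h1, fun i => ?_, h3⟩
    have := congrFun h2 i
    simpa [Matrix.mulVec, dotProduct] using this
end

section
/- Let d ∈ ℝ^n have all entries strictly positive. Then d ≺_d x for every x ∈ ℝ^n with Σ_i x_i = Σ_i d_i, and d is the unique such minimal element: if z ∈ ℝ^n satisfies Σ_i z_i = Σ_i d_i and z ≺_d x for all x ∈ ℝ^n with Σ_i x_i = Σ_i d_i, then z = d. -/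
theorem stmt8 {n : ℕ} (d : Fin n → ℝ) (hd : ∀ i, 0 < d i) :
    (∀ x : Fin n → ℝ, ∑ i, x i = ∑ i, d i → DMaj d d x) ∧
    (∀ z : Fin n → ℝ, (∑ i, z i = ∑ i, d i) →
      (∀ x : Fin n → ℝ, ∑ i, x i = ∑ i, d i → DMaj d z x) → z = d) := by
  have key : ∀ x : Fin n → ℝ, ∑ i, x i = ∑ i, d i →
      Matrix.mulVec (Matrix.of fun i _ : Fin n => d i / ∑ k, d k) x = d := by
    intro x hx
    funext i
    have hpos : 0 < ∑ k, d k := Finset.sum_pos (fun k _ => hd k) ⟨i, Finset.mem_univ i⟩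
    simp only [Matrix.mulVec, dotProduct, Matrix.of_apply]
    rw [← Finset.mul_sum, hx, div_mul_cancel₀ _ hpos.ne']
  refine ⟨fun x hx => ⟨Matrix.of fun i _ : Fin n => d i / ∑ k, d k, ⟨?_, ?_, key d rfl⟩,
    (key x hx).symm⟩, ?_⟩
  · intro i j
    exact div_nonneg (hd i).le (Finset.sum_nonneg fun k _ => (hd k).le)
  · intro j
    have hpos : 0 < ∑ k, d k := Finset.sum_pos (fun k _ => hd k) ⟨j, Finset.mem_univ j⟩
    simp only [Matrix.of_apply]
    rw [← Finset.sum_div, div_self hpos.ne']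
  · intro z _ h
    obtain ⟨A, hA, hz⟩ := h d rfl
    rw [hz, hA.2.2]
end

section
/- Let d ∈ ℝ^n have all entries strictly positive and let k be an index at which d attains its minimum (d_k ≤ d_j for all j). Then x ≺_d (Σ_i d_i)·e_k for every x ∈ ℝ^n with nonnegative entries and Σ_i x_i = Σ_i d_i, where e_k is the k-th standard basis vector. Moreover, (Σ_i d_i)·e_k is the unique vector w with nonnegative entries and Σ_i w_i = Σ_i d_i satisfying x ≺_d w for all such x if and only if d_k is the unique minimal entry of d (i.e., d_k < d_j for all j ≠ k). -/
theorem dmaj_of_min {n : ℕ} (d : Fin n → ℝ) (hd : ∀ i, 0 < d i) (k : Fin n)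
    (hk : ∀ j, d k ≤ d j) (x : Fin n → ℝ) (hx : ∀ i, 0 ≤ x i)
    (hs : ∑ i, x i = ∑ i, d i) :
    DMaj d x (fun i => if i = k then ∑ j, d j else 0) := by
  obtain ⟨S, hS⟩ : ∃ S, S = ∑ i, d i := ⟨_, rfl⟩
  rw [← hS] at hs ⊢
  have hSpos : 0 < S := by
    rw [hS]; exact Finset.sum_pos (fun i _ => hd i) ⟨k, Finset.mem_univ k⟩
  have hxS : ∀ i, x i / S ≤ 1 := fun i => by
    rw [div_le_one hSpos, ← hs]
    exact Finset.single_le_sum (fun i _ => hx i) (Finset.mem_univ i)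
  have hx0 : ∀ i, 0 ≤ x i / S := fun i => div_nonneg (hx i) hSpos.le
  have hxs1 : ∑ i, x i / S = 1 := by
    rw [← Finset.sum_div, hs, div_self hSpos.ne']
  have hy0 : ∀ i, 0 ≤ d i - x i / S * d k := fun i => by
    nlinarith [hxS i, hx0 i, hk i, hd k]
  have hys : ∑ i, (d i - x i / S * d k) = S - d k := by
    rw [Finset.sum_sub_distrib, ← Finset.sum_mul, hxs1, hS, one_mul]
  have hE : ∑ j ∈ Finset.univ.erase k, d j = S - d k := by
    rw [hS, ← Finset.add_sum_erase _ d (Finset.mem_univ k)]; ring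
  have hlt : ∀ j, j ≠ k → 0 < S - d k := fun j hj => by
    rw [← hE]
    exact Finset.sum_pos (fun i _ => hd i) ⟨j, by simp [hj]⟩
  have hSk : 0 ≤ S - d k := by
    rw [← hE]; exact Finset.sum_nonneg (fun i _ => (hd i).le)
  refine ⟨Matrix.of fun i j => if j = k then x i / S
    else (d i - x i / S * d k) / (S - d k), ⟨?_, ?_, ?_⟩, ?_⟩
  · intro i j
    simp only [Matrix.of_apply]
    split_ifs
    · exact hx0 i
    · exact div_nonneg (hy0 i) hSk
  · intro j
    simp only [Matrix.of_apply]
    split_ifs with h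
    · exact hxs1
    · rw [← Finset.sum_div, hys, div_self (hlt j h).ne']
  · funext i
    simp only [Matrix.mulVec, dotProduct, Matrix.of_apply]
    rw [← Finset.add_sum_erase _ _ (Finset.mem_univ k)]
    have : ∑ j ∈ Finset.univ.erase k, (if j = k then x i / S
        else (d i - x i / S * d k) / (S - d k)) * d j
        = ∑ j ∈ Finset.univ.erase k, (d i - x i / S * d k) / (S - d k) * d j :=
      Finset.sum_congr rfl (fun j hj => by rw [if_neg (Finset.ne_of_mem_erase hj)])
    rw [this, ← Finset.mul_sum, hE, if_pos rfl]
    by_cases h0 : S - d k = 0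
    · have := (Finset.sum_eq_zero_iff_of_nonneg (fun i _ => hy0 i)).1 (hys.trans h0) i
        (Finset.mem_univ i)
      rw [h0, mul_zero]; linarith
    · rw [div_mul_cancel₀ _ h0]; ring
  · funext i
    simp [Matrix.mulVec, dotProduct, hSpos.ne']

theorem stmt9 {n : ℕ} (d : Fin n → ℝ) (hd : ∀ i, 0 < d i) (k : Fin n)
    (hk : ∀ j, d k ≤ d j) :
    (∀ x : Fin n → ℝ, (∀ i, 0 ≤ x i) → ∑ i, x i = ∑ i, d i →
      DMaj d x (fun i => if i = k then ∑ j, d j else 0)) ∧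
    ((∀ w : Fin n → ℝ, (∀ i, 0 ≤ w i) → (∑ i, w i = ∑ i, d i) →
        (∀ x : Fin n → ℝ, (∀ i, 0 ≤ x i) → ∑ i, x i = ∑ i, d i → DMaj d x w) →
        w = fun i => if i = k then ∑ j, d j else 0) ↔
      (∀ j, j ≠ k → d k < d j)) := by
  refine ⟨fun x hx hs => dmaj_of_min d hd k hk x hx hs, ?_, ?_⟩
  · intro h j hj
    refine lt_of_le_of_ne (hk j) fun he => ?_
    have hSpos : 0 < ∑ i, d i :=
      Finset.sum_pos (fun i _ => hd i) ⟨k, Finset.mem_univ k⟩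
    have := congrFun (h (fun i => if i = j then ∑ j, d j else 0)
      (fun i => by
        show (0 : ℝ) ≤ if i = j then ∑ j, d j else 0
        split_ifs
        · exact hSpos.le
        · exact le_rfl) (by simp)
      (fun x hx hs => dmaj_of_min d hd j (fun i => he ▸ hk i) x hx hs)) j
    simp only [if_true, if_neg hj] at this
    exact hSpos.ne' this
  · intro h w hw hws hall
    have hSpos : 0 < ∑ i, d i :=
      Finset.sum_pos (fun i _ => hd i) ⟨k, Finset.mem_univ k⟩
    obtain ⟨A, ⟨hA0, hA1, hAd⟩, hAw⟩ := hall (fun i => if i = k then ∑ j, d j else 0)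
      (fun i => by
        show (0 : ℝ) ≤ if i = k then ∑ j, d j else 0
        split_ifs
        · exact hSpos.le
        · exact le_rfl) (by simp)
    have hk1 := congrFun hAw k
    have hk2 := congrFun hAd k
    simp only [Matrix.mulVec, dotProduct, if_true] at hk1 hk2
    have hle : ∀ j, A k j ≤ 1 := fun j => by
      rw [← hA1 j]
      exact Finset.single_le_sum (f := fun i => A i j) (fun i _ => hA0 i j) (Finset.mem_univ k)
    have hz : ∑ j, (1 - A k j) * w j = 0 := by
      simp only [sub_mul, one_mul, Finset.sum_sub_distrib]
      linarith
    have hz' := (Finset.sum_eq_zero_iff_of_nonneg (fun j _ =>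
      mul_nonneg (sub_nonneg.2 (hle j)) (hw j))).1 hz
    have hw0 : ∀ j, j ≠ k → w j = 0 := fun j hj => by
      rcases mul_eq_zero.1 (hz' j (Finset.mem_univ j)) with h1 | h1
      · exfalso
        have : A k j * d j ≤ ∑ j, A k j * d j :=
          Finset.single_le_sum (f := fun j => A k j * d j)
            (fun i _ => mul_nonneg (hA0 k i) (hd i).le) (Finset.mem_univ j)
        have h2 : A k j = 1 := by linarith
        rw [hk2, h2, one_mul] at this
        exact absurd (h j hj) (not_lt.2 this)
      · exact h1
    funext i
    by_cases hi : i = k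
    · subst hi
      rw [if_pos rfl, ← hws]
      exact (Finset.sum_eq_single i (fun j _ hj => hw0 j hj) (by simp)).symm
    · rw [if_neg hi, hw0 i hi]
end

section
/- Let z ∈ ℝ^n (with n ≥ 2) and write z = z₊ − z₋ for its entrywise positive and negative parts. Then the set {x ∈ ℝ^n : Σ_i x_i = Σ_i z_i and ‖x‖₁ ≤ ‖z‖₁} equals the set {x ∈ ℝ^n : x ≺ ẑ}, where ẑ := (Σ_i (z₊)_i, −Σ_i (z₋)_i, 0, …, 0) ∈ ℝ^n. -/
/-- The degenerate case `P = 0` of the construction of the first two columns. -/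
lemma cols_zero {n : ℕ} (hn : 2 ≤ n) (N : ℝ) (hN : 0 ≤ N) (x : Fin n → ℝ)
    (hx : ∀ i, x i ≤ 0) (hs : ∑ i, x i = -N) :
    ∃ a b : Fin n → ℝ, (∀ i, 0 ≤ a i) ∧ (∀ i, 0 ≤ b i) ∧ (∀ i, a i + b i ≤ 1) ∧
      ∑ i, a i = 1 ∧ ∑ i, b i = 1 ∧ ∀ i, x i = 0 * a i - N * b i := by
  have hn' : (2:ℝ) ≤ n := by exact_mod_cast hn
  rcases hN.eq_or_lt with h0 | hN
  · subst h0
    have hx0 : ∀ i, x i = 0 := by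
      have := (Finset.sum_eq_zero_iff_of_nonpos (s := Finset.univ) (f := x) (fun i _ => hx i)).1
        (by simpa using hs)
      simpa using this
    refine ⟨fun _ => 1 / n, fun _ => 1 / n, fun i => by positivity, fun i => by positivity,
      fun i => ?_, ?_, ?_, fun i => by simp [hx0 i]⟩
    · rw [← add_div, div_le_one (by linarith)]; linarith
    · simp; field_simp
    · simp; field_simp
  · have hle : ∀ i, -x i ≤ N := fun i => by
      have := Finset.single_le_sum (s := Finset.univ) (f := fun i => -x i)
        (fun i _ => by linarith [hx i]) (Finset.mem_univ i)
      simp [hs] at this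
      linarith
    have hb : ∀ i, -x i / N ≤ 1 := fun i => by rw [div_le_one hN]; exact hle i
    refine ⟨fun i => (1 - -x i / N) / (n - 1), fun i => -x i / N, fun i => ?_, fun i => ?_,
      fun i => ?_, ?_, ?_, fun i => ?_⟩
    · exact div_nonneg (by linarith [hb i]) (by linarith)
    · exact div_nonneg (by linarith [hx i]) hN.le
    · have : (1 - -x i / N) / ((n:ℝ) - 1) ≤ 1 - -x i / N :=
        div_le_self (by linarith [hb i]) (by linarith)
      linarith
    · rw [← Finset.sum_div, Finset.sum_sub_distrib, ← Finset.sum_div, Finset.sum_neg_distrib, hs]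
      simp [hN.ne']
      have : (n:ℝ) - 1 ≠ 0 := by
        have : 0 < (n:ℝ) - 1 := by linarith
        exact this.ne'
      exact this
    · rw [← Finset.sum_div, Finset.sum_neg_distrib, hs]
      simp [hN.ne']
    · field_simp; ring

/-- Construction of the first two columns. -/
lemma cols {n : ℕ} (hn : 2 ≤ n) (P N : ℝ) (hP : 0 ≤ P) (hN : 0 ≤ N) (x : Fin n → ℝ)
    (hs : ∑ i, x i = P - N) (hl : ∑ i, |x i| ≤ P + N) :
    ∃ a b : Fin n → ℝ, (∀ i, 0 ≤ a i) ∧ (∀ i, 0 ≤ b i) ∧ (∀ i, a i + b i ≤ 1) ∧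
      ∑ i, a i = 1 ∧ ∑ i, b i = 1 ∧ ∀ i, x i = P * a i - N * b i := by
  have hn' : (2:ℝ) ≤ n := by exact_mod_cast hn
  obtain ⟨p, hp⟩ : ∃ p : Fin n → ℝ, p = fun i => max (x i) 0 := ⟨_, rfl⟩
  obtain ⟨q, hq⟩ : ∃ q : Fin n → ℝ, q = fun i => max (-x i) 0 := ⟨_, rfl⟩
  have hp0 : ∀ i, 0 ≤ p i := fun i => by simp [hp]
  have hq0 : ∀ i, 0 ≤ q i := fun i => by simp [hq]
  have hpq : ∀ i, p i - q i = x i := fun i => by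
    simp only [hp, hq]; rcases le_total (x i) 0 with h | h <;> simp [h]
  have hpa : ∀ i, p i + q i = |x i| := fun i => by
    simp only [hp, hq]; rcases le_total (x i) 0 with h | h <;> simp [h, abs_of_nonpos, abs_of_nonneg]
  have hor : ∀ i, p i = 0 ∨ q i = 0 := fun i => by
    simp only [hp, hq]; rcases le_total (x i) 0 with h | h <;> simp [h]
  clear hp hq
  have h1 : ∑ i, p i - ∑ i, q i = P - N := by
    rw [← hs, ← Finset.sum_sub_distrib]; exact Finset.sum_congr rfl fun i _ => hpq i
  have h2 : ∑ i, p i + ∑ i, q i ≤ P + N := by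
    rw [← Finset.sum_add_distrib]; simpa only [hpa] using hl
  have hpl : ∀ i, p i ≤ ∑ i, p i := fun i =>
    Finset.single_le_sum (fun i _ => hp0 i) (Finset.mem_univ i)
  have hql : ∀ i, q i ≤ ∑ i, q i := fun i =>
    Finset.single_le_sum (fun i _ => hq0 i) (Finset.mem_univ i)
  rcases hP.eq_or_lt with h0 | hP
  · subst h0
    refine cols_zero hn N hN x (fun i => ?_) (by linarith)
    linarith [hpl i, hpq i, hq0 i]
  rcases hN.eq_or_lt with h0 | hN
  · subst h0
    obtain ⟨a, b, ha, hb, hab, hsa, hsb, hx⟩ := cols_zero hn P hP.le (fun i => -x i)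
      (fun i => by linarith [hql i, hpq i, hp0 i]) (by simp [hs])
    exact ⟨b, a, hb, ha, fun i => by linarith [hab i], hsb, hsa, fun i => by linarith [hx i]⟩
  obtain ⟨d, hd⟩ : ∃ d, d = P - ∑ i, p i := ⟨_, rfl⟩
  have hd0 : 0 ≤ d := by linarith
  have hsp : ∑ i, p i = P - d := by linarith
  have hsq : ∑ i, q i = N - d := by linarith
  obtain ⟨u, hu⟩ : ∃ u : Fin n → ℝ, u = fun i => (P * N - N * p i - P * q i) / (P + N) := ⟨_, rfl⟩
  have hu0 : ∀ i, 0 ≤ u i := fun i => by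
    rw [hu]
    refine div_nonneg ?_ (by positivity)
    have e1 := hpl i
    have e2 := hql i
    rcases hor i with h | h
    · rw [h]; nlinarith
    · rw [h]; nlinarith
  have hsu : ∑ i, u i = d + (n - 2) * (P * N) / (P + N) := by
    rw [hu, ← Finset.sum_div, Finset.sum_sub_distrib, Finset.sum_sub_distrib, ← Finset.mul_sum,
      ← Finset.mul_sum, ← Finset.mul_sum, hsp, hsq]
    simp
    field_simp
    ring
  have hdu : d ≤ ∑ i, u i := by
    have : 0 ≤ (n - 2) * (P * N) / (P + N) :=
      div_nonneg (mul_nonneg (by linarith) (by positivity)) (by positivity)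
    linarith
  obtain ⟨t, ht0, htu, hst⟩ : ∃ t : Fin n → ℝ, (∀ i, 0 ≤ t i) ∧ (∀ i, t i ≤ u i) ∧
      ∑ i, t i = d := by
    have hU : 0 ≤ ∑ i, u i := by linarith
    refine ⟨fun i => u i * (d / ∑ i, u i), fun i => mul_nonneg (hu0 i) (div_nonneg hd0 hU),
      fun i => mul_le_of_le_one_right (hu0 i) (div_le_one_of_le₀ hdu hU), ?_⟩
    rw [← Finset.sum_mul]
    rcases hU.eq_or_lt with h | h
    · rw [← h]; simp; linarith
    · field_simp
  refine ⟨fun i => (p i + t i) / P, fun i => (q i + t i) / N, fun i => ?_, fun i => ?_,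
    fun i => ?_, ?_, ?_, fun i => ?_⟩
  · exact div_nonneg (add_nonneg (hp0 i) (ht0 i)) hP.le
  · exact div_nonneg (add_nonneg (hq0 i) (ht0 i)) hN.le
  · have h := htu i
    rw [hu] at h
    simp only at h
    rw [le_div_iff₀ (by positivity)] at h
    simp only
    rw [div_add_div _ _ hP.ne' hN.ne', div_le_one (by positivity)]
    linarith
  · rw [← Finset.sum_div, Finset.sum_add_distrib, hst, hsp]
    simp [hP.ne']
  · rw [← Finset.sum_div, Finset.sum_add_distrib, hst, hsq]
    simp [hN.ne']
  · simp only
    rw [mul_div_cancel₀ _ hP.ne', mul_div_cancel₀ _ hN.ne', ← hpq i]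
    ring

lemma maj_of_cols {m : ℕ} (P N : ℝ) (x a b : Fin (m + 2) → ℝ)
    (ha : ∀ i, 0 ≤ a i) (hb : ∀ i, 0 ≤ b i) (hab : ∀ i, a i + b i ≤ 1)
    (hsa : ∑ i, a i = 1) (hsb : ∑ i, b i = 1) (hx : ∀ i, x i = P * a i - N * b i) :
    Maj x (fun i => if (i : ℕ) = 0 then P else if (i : ℕ) = 1 then -N else 0) := by
  have hc : ∑ i, (1 - a i - b i) = m := by
    simp [Finset.sum_sub_distrib, hsa, hsb]
    ring
  refine ⟨fun i => Fin.cons (a i) (Fin.cons (b i) fun _ : Fin m => (1 - a i - b i) / m),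
    fun i j => ?_, fun j => ?_, fun i => ?_, funext fun i => ?_⟩
  · refine Fin.cases ?_ (fun j => Fin.cases ?_ (fun j => ?_) j) j
    · simpa using ha i
    · simpa using hb i
    · simp only [Fin.cons_succ]
      exact div_nonneg (by linarith [hab i]) (by positivity)
  · refine Fin.cases ?_ (fun j => Fin.cases ?_ (fun j => ?_) j) j
    · simpa using hsa
    · simpa using hsb
    · simp only [Fin.cons_succ]
      have : (m : ℝ) ≠ 0 := by
        have := j.pos
        positivity
      rw [← Finset.sum_div, hc, div_self this]
  · rw [Fin.sum_univ_succ, Fin.sum_univ_succ]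
    simp only [Fin.cons_succ, Fin.cons_zero, Finset.sum_const, Finset.card_univ, Fintype.card_fin,
      nsmul_eq_mul]
    rcases Nat.eq_zero_or_pos m with h | h
    · have := (Finset.sum_eq_zero_iff_of_nonneg (s := Finset.univ)
        (f := fun i => 1 - a i - b i) (fun i _ => by linarith [hab i])).1 (by rw [hc]; simp [h])
        i (Finset.mem_univ i)
      subst h; simp; linarith
    · have : (m : ℝ) ≠ 0 := by positivity
      field_simp
      ring
  · simp only [hx i, Matrix.mulVec, dotProduct]
    rw [Fin.sum_univ_succ, Fin.sum_univ_succ]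
    simp
    ring

theorem stmt11 {n : ℕ} (hn : 2 ≤ n) (z : Fin n → ℝ) :
    {x : Fin n → ℝ | (∑ i, x i = ∑ i, z i) ∧ ∑ i, |x i| ≤ ∑ i, |z i|} =
      {x : Fin n → ℝ |
        Maj x (fun i => if (i : ℕ) = 0 then ∑ j, max (z j) 0
          else if (i : ℕ) = 1 then -∑ j, max (-z j) 0 else 0)} := by
  have hP : 0 ≤ ∑ j, max (z j) 0 := Finset.sum_nonneg fun i _ => le_max_right _ _
  have hN : 0 ≤ ∑ j, max (-z j) 0 := Finset.sum_nonneg fun i _ => le_max_right _ _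
  have h1 : ∑ i, z i = ∑ j, max (z j) 0 - ∑ j, max (-z j) 0 := by
    rw [← Finset.sum_sub_distrib]
    refine Finset.sum_congr rfl fun i _ => ?_
    rcases le_total (z i) 0 with h | h <;> simp [h]
  have h2 : ∑ i, |z i| = ∑ j, max (z j) 0 + ∑ j, max (-z j) 0 := by
    rw [← Finset.sum_add_distrib]
    refine Finset.sum_congr rfl fun i _ => ?_
    rcases le_total (z i) 0 with h | h <;> simp [h, abs_of_nonpos, abs_of_nonneg]
  rw [h1, h2]
  generalize ∑ j, max (z j) 0 = P at *
  generalize ∑ j, max (-z j) 0 = N at *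
  clear h1 h2
  obtain ⟨m, rfl⟩ : ∃ m, n = m + 2 := ⟨n - 2, by omega⟩
  ext x
  simp only [Set.mem_ofPred_eq]
  constructor
  · rintro ⟨hs, hl⟩
    obtain ⟨a, b, ha, hb, hab, hsa, hsb, hx⟩ := cols hn P N hP hN x hs hl
    exact maj_of_cols P N x a b ha hb hab hsa hsb hx
  · rintro ⟨A, hA, hc, -, rfl⟩
    have e : ∀ i, A.mulVec (fun i : Fin (m + 2) => if (i : ℕ) = 0 then P else
        if (i : ℕ) = 1 then -N else 0) i = A i 0 * P - A i 1 * N := fun i => by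
      rw [Matrix.mulVec, dotProduct, Fin.sum_univ_succ, Fin.sum_univ_succ]
      simp
      ring
    simp only [e]
    constructor
    · rw [Finset.sum_sub_distrib, ← Finset.sum_mul, ← Finset.sum_mul, hc, hc]; ring
    · calc ∑ i, |A i 0 * P - A i 1 * N| ≤ ∑ i, (A i 0 * P + A i 1 * N) := by
            refine Finset.sum_le_sum fun i _ => ?_
            have := mul_nonneg (hA i 0) hP
            have := mul_nonneg (hA i 1) hN
            rw [abs_le]; constructor <;> linarith
        _ = P + N := by
            rw [Finset.sum_add_distrib, ← Finset.sum_mul, ← Finset.sum_mul, hc, hc]; ring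
end

section
/- Let d ∈ ℝ^n have all entries strictly positive, let c ∈ ℝ, and let P ⊆ ℝ^n be a set such that Σ_i x_i = c for all x ∈ P. Then M_d(P) := ∪_{y∈P} {x ∈ ℝ^n : x ≺_d y} is star-shaped with respect to the point (c / Σ_i d_i)·d, i.e. for every z ∈ M_d(P) and every λ ∈ [0,1], the point λ·(c/Σ_i d_i)·d + (1−λ)·z lies in M_d(P). -/
theorem stmt13 {n : ℕ} (d : Fin n → ℝ) (hd : ∀ i, 0 < d i) (c : ℝ)
    (P : Set (Fin n → ℝ)) (hP : ∀ x ∈ P, ∑ i, x i = c) :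
    ∀ z ∈ {x : Fin n → ℝ | ∃ y ∈ P, DMaj d x y}, ∀ t ∈ Set.Icc (0:ℝ) 1,
      t • ((c / ∑ i, d i) • d) + (1 - t) • z ∈ {x : Fin n → ℝ | ∃ y ∈ P, DMaj d x y} := by
  rintro z ⟨y, hy, A, ⟨hA0, hA1, hAd⟩, rfl⟩ t ⟨ht0, ht1⟩
  have hS : ∀ _ : Fin n, 0 < ∑ i, d i := fun j =>
    Finset.sum_pos (fun i _ => hd i) ⟨j, Finset.mem_univ j⟩
  have key : ∀ (v : Fin n → ℝ) (i : Fin n),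
      (Matrix.of fun i j => t * (d i / ∑ k, d k) + (1 - t) * A i j).mulVec v i
        = t * (d i / ∑ k, d k) * (∑ k, v k) + (1 - t) * A.mulVec v i := by
    intro v i
    simp only [Matrix.mulVec, dotProduct, Matrix.of_apply, Finset.mul_sum,
      ← Finset.sum_add_distrib]
    refine Finset.sum_congr rfl fun j _ => ?_
    ring
  refine ⟨y, hy, Matrix.of fun i j => t * (d i / ∑ k, d k) + (1 - t) * A i j,
    ⟨?_, ?_, ?_⟩, ?_⟩
  · intro i j
    have h1 := div_nonneg (hd i).le (hS i).le
    have h2 := hA0 i j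
    have h3 : 0 ≤ 1 - t := by linarith
    simp only [Matrix.of_apply]
    exact add_nonneg (mul_nonneg ht0 h1) (mul_nonneg h3 h2)
  · intro j
    simp only [Matrix.of_apply, Finset.sum_add_distrib, ← Finset.mul_sum, ← Finset.sum_div, hA1]
    rw [div_self (hS j).ne']
    ring
  · ext i
    have := (hS i).ne'
    rw [key, hAd]
    field_simp
    ring
  · ext i
    rw [key, hP y hy]
    simp only [Pi.add_apply, Pi.smul_apply, smul_eq_mul]
    ring
end

section
/- Let d ∈ ℝ^n have all entries strictly positive and let P ⊆ ℝ^n be compact. Then M_d(P) := ∪_{y∈P} {x ∈ ℝ^n : x ≺_d y} is compact. -/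
theorem stmt14 {n : ℕ} (d : Fin n → ℝ) (hd : ∀ i, 0 < d i)
    (P : Set (Fin n → ℝ)) (hP : IsCompact P) :
    IsCompact {x : Fin n → ℝ | ∃ y ∈ P, DMaj d x y} := by
  have hS : IsCompact {A : Matrix (Fin n) (Fin n) ℝ | IsDStochastic d A} := by
    have hK : IsCompact (Set.univ.pi fun _ : Fin n => Set.univ.pi fun _ : Fin n =>
        Set.Icc (0 : ℝ) 1) :=
      isCompact_univ_pi fun _ => isCompact_univ_pi fun _ => isCompact_Icc
    refine IsCompact.of_isClosed_subset (X := Matrix (Fin n) (Fin n) ℝ) hK ?_ ?_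
    · have h1 : IsClosed {A : Matrix (Fin n) (Fin n) ℝ | ∀ i j, 0 ≤ A i j} := by
        simp only [Set.setOf_forall]
        exact isClosed_iInter fun i => isClosed_iInter fun j =>
          isClosed_le continuous_const (continuous_id.matrix_elem i j)
      have h2 : IsClosed {A : Matrix (Fin n) (Fin n) ℝ | ∀ j, ∑ i, A i j = 1} := by
        simp only [Set.setOf_forall]
        exact isClosed_iInter fun j =>
          isClosed_eq (continuous_finsetSum _ fun i _ => continuous_id.matrix_elem i j)
            continuous_const
      have h3 : IsClosed {A : Matrix (Fin n) (Fin n) ℝ | A.mulVec d = d} :=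
        isClosed_eq (continuous_id.matrix_mulVec continuous_const) continuous_const
      exact h1.inter (h2.inter h3)
    · rintro A ⟨h0, h1, -⟩ i - j -
      refine ⟨h0 i j, ?_⟩
      rw [← h1 j]
      exact Finset.single_le_sum (f := fun i => A i j) (fun i _ => h0 i j) (Finset.mem_univ i)
  have hc : Continuous fun p : Matrix (Fin n) (Fin n) ℝ × (Fin n → ℝ) => p.1.mulVec p.2 :=
    continuous_fst.matrix_mulVec continuous_snd
  convert (hS.prod hP).image hc using 1
  ext x
  constructor
  · rintro ⟨y, hy, A, hA, rfl⟩
    exact ⟨(A, y), ⟨hA, hy⟩, rfl⟩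
  · rintro ⟨⟨A, y⟩, ⟨hA, hy⟩, rfl⟩
    exact ⟨y, hy, A, hA, rfl⟩
end

section
/- Let d ∈ ℝ^n have all entries strictly positive and let P, P' ⊆ ℝ^n be nonempty compact sets. Then the Hausdorff distance (with respect to the ℓ¹ metric on ℝ^n) between M_d(P) and M_d(P') is at most the Hausdorff distance between P and P', where M_d(Q) := ∪_{y∈Q} {x ∈ ℝ^n : x ≺_d y}. -/
theorem DMaj_contr {n : ℕ} (d : Fin n → ℝ) {A : Matrix (Fin n) (Fin n) ℝ}
    (hA : IsDStochastic d A) (y y' : PiLp 1 (fun _ : Fin n => ℝ)) :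
    ∑ i, |A.mulVec (fun i => y i) i - A.mulVec (fun i => y' i) i| ≤ dist y y' := by
  have hdist : dist y y' = ∑ j, |y j - y' j| := by
    rw [PiLp.dist_eq_of_L1]
    simp [Real.dist_eq]
  rw [hdist]
  calc ∑ i, |A.mulVec (fun i => y i) i - A.mulVec (fun i => y' i) i|
      ≤ ∑ i, ∑ j, A i j * |y j - y' j| := by
        refine Finset.sum_le_sum fun i _ => ?_
        simp only [Matrix.mulVec, dotProduct]
        rw [← Finset.sum_sub_distrib]
        refine (Finset.abs_sum_le_sum_abs _ _).trans (le_of_eq ?_)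
        refine Finset.sum_congr rfl fun j _ => ?_
        rw [← mul_sub, abs_mul, abs_of_nonneg (hA.1 i j)]
    _ = ∑ j, |y j - y' j| := by
        rw [Finset.sum_comm]
        refine Finset.sum_congr rfl fun j _ => ?_
        rw [← Finset.sum_mul, hA.2.1 j, one_mul]

theorem DMaj_half {n : ℕ} (d : Fin n → ℝ)
    (P P' : Set (PiLp 1 (fun _ : Fin n => ℝ)))
    (hPne : P.Nonempty) (hP'ne : P'.Nonempty)
    (hPc : IsCompact P) (hP'c : IsCompact P')
    (x : PiLp 1 (fun _ : Fin n => ℝ))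
    (hx : ∃ y ∈ P, DMaj d (fun i => x i) (fun i => y i)) :
    ∃ x' ∈ {x : PiLp 1 (fun _ : Fin n => ℝ) | ∃ y ∈ P', DMaj d (fun i => x i) (fun i => y i)},
      dist x x' ≤ Metric.hausdorffDist P P' := by
  obtain ⟨y, hy, A, hA, hxA⟩ := hx
  obtain ⟨y', hy', hyy⟩ := hP'c.exists_infDist_eq_dist hP'ne y
  have hle : dist y y' ≤ Metric.hausdorffDist P P' := by
    rw [← hyy]
    exact Metric.infDist_le_hausdorffDist_of_mem hy
      (Metric.hausdorffEDist_ne_top_of_nonempty_of_bounded hPne hP'ne hPc.isBounded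
        hP'c.isBounded)
  refine ⟨WithLp.toLp 1 (A.mulVec (fun i => y' i)), ⟨y', hy', A, hA, rfl⟩, ?_⟩
  refine le_trans (le_trans (le_of_eq ?_) (DMaj_contr d hA y y')) hle
  rw [PiLp.dist_eq_of_L1]
  refine Finset.sum_congr rfl fun i _ => ?_
  rw [Real.dist_eq, ← hxA]

theorem stmt15 {n : ℕ} (d : Fin n → ℝ) (hd : ∀ i, 0 < d i)
    (P P' : Set (PiLp 1 (fun _ : Fin n => ℝ)))
    (hPne : P.Nonempty) (hP'ne : P'.Nonempty)
    (hPc : IsCompact P) (hP'c : IsCompact P') :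
    Metric.hausdorffDist
        {x : PiLp 1 (fun _ : Fin n => ℝ) | ∃ y ∈ P, DMaj d (fun i => x i) (fun i => y i)}
        {x : PiLp 1 (fun _ : Fin n => ℝ) | ∃ y ∈ P', DMaj d (fun i => x i) (fun i => y i)} ≤
      Metric.hausdorffDist P P' := by
  refine Metric.hausdorffDist_le_of_mem_dist Metric.hausdorffDist_nonneg ?_ ?_
  · intro x hx
    exact DMaj_half d P P' hPne hP'ne hPc hP'c x hx
  · intro x hx
    rw [Metric.hausdorffDist_comm]
    exact DMaj_half d P' P hP'ne hPne hP'c hPc x hx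
end

section
/- Let y ∈ ℝ^n. Then the set {x ∈ ℝ^n : x ≺ y} equals the convex hull of the set { (y_{σ(1)}, …, y_{σ(n)}) : σ a permutation of {1,…,n} }, and every entrywise permutation of y is an extreme point of this set. -/
theorem maj_set_eq {n : ℕ} (y : Fin n → ℝ) :
    {x : Fin n → ℝ | Maj x y} =
      convexHull ℝ {w : Fin n → ℝ | ∃ σ : Equiv.Perm (Fin n), w = fun i => y (σ i)} := by
  let L : Matrix (Fin n) (Fin n) ℝ →ₗ[ℝ] (Fin n → ℝ) :=
    { toFun := fun A => A.mulVec y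
      map_add' := fun A B => Matrix.add_mulVec A B y
      map_smul' := fun c A => Matrix.smul_mulVec c A y }
  have h1 : {x : Fin n → ℝ | Maj x y} =
      Set.image L (doublyStochastic ℝ (Fin n) : Set (Matrix (Fin n) (Fin n) ℝ)) := by
    ext x
    constructor
    · rintro ⟨A, h0, hc, hr, rfl⟩
      exact ⟨A, mem_doublyStochastic_iff_sum.2 ⟨h0, hr, hc⟩, rfl⟩
    · rintro ⟨A, hA, rfl⟩
      obtain ⟨h0, hr, hc⟩ := mem_doublyStochastic_iff_sum.1 hA
      exact ⟨A, h0, hc, hr, rfl⟩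
  rw [h1, doublyStochastic_eq_convexHull_permMatrix, LinearMap.image_convexHull]
  congr 1
  ext w
  constructor
  · rintro ⟨_, ⟨σ, rfl⟩, rfl⟩
    exact ⟨σ, Matrix.permMatrix_mulVec σ⟩
  · rintro ⟨σ, rfl⟩
    exact ⟨_, ⟨σ, rfl⟩, Matrix.permMatrix_mulVec σ⟩

theorem maj_sq_le {n : ℕ} {x y : Fin n → ℝ} (h : Maj x y) :
    ∑ i, x i ^ 2 ≤ ∑ i, y i ^ 2 := by
  obtain ⟨A, h0, hc, hr, rfl⟩ := h
  calc ∑ i, (A.mulVec y) i ^ 2 ≤ ∑ i, ∑ j, A i j * y j ^ 2 := by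
        refine Finset.sum_le_sum fun i _ => ?_
        have := (even_two.convexOn_pow (𝕜 := ℝ)).map_sum_le (t := Finset.univ) (w := A i) (p := y)
          (fun j _ => h0 i j) (hr i) (fun _ _ => Set.mem_univ _)
        simpa [Matrix.mulVec, dotProduct] using this
    _ = ∑ j, y j ^ 2 := by
        rw [Finset.sum_comm]
        simp [← Finset.sum_mul, hc]

theorem stmt17 {n : ℕ} (y : Fin n → ℝ) :
    {x : Fin n → ℝ | Maj x y} =
      convexHull ℝ {w : Fin n → ℝ | ∃ σ : Equiv.Perm (Fin n), w = fun i => y (σ i)} ∧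
    ∀ σ : Equiv.Perm (Fin n),
      (fun i => y (σ i)) ∈ Set.extremePoints ℝ {x : Fin n → ℝ | Maj x y} := by
  refine ⟨maj_set_eq y, fun σ => ?_⟩
  rw [mem_extremePoints_iff_left]
  refine ⟨?_, ?_⟩
  · rw [maj_set_eq]
    exact subset_convexHull ℝ _ ⟨σ, rfl⟩
  · rintro a ha b hb ⟨s, t, hs, ht, hst, hp⟩
    have hasq := maj_sq_le ha
    have hbsq := maj_sq_le hb
    have hy : ∑ i, y (σ i) ^ 2 = ∑ i, y i ^ 2 := Equiv.sum_comp σ (fun i => y i ^ 2)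
    have hpi : ∀ i, y (σ i) = s * a i + t * b i := fun i => by
      simpa using (congrFun hp i).symm
    have hid : ∑ i, y (σ i) ^ 2 =
        s * ∑ i, a i ^ 2 + t * ∑ i, b i ^ 2 - s * t * ∑ i, (a i - b i) ^ 2 := by
      simp only [Finset.mul_sum, ← Finset.sum_add_distrib, ← Finset.sum_sub_distrib]
      refine Finset.sum_congr rfl fun i _ => ?_
      rw [hpi i]
      obtain rfl : t = 1 - s := by linarith
      ring
    have hle : s * t * ∑ i, (a i - b i) ^ 2 ≤ 0 := by
      have e1 := mul_le_mul_of_nonneg_left hasq hs.le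
      have e2 := mul_le_mul_of_nonneg_left hbsq ht.le
      have e3 : s * ∑ i, y i ^ 2 + t * ∑ i, y i ^ 2 = ∑ i, y i ^ 2 := by
        rw [← add_mul, hst, one_mul]
      linarith
    have h0 : ∑ i, (a i - b i) ^ 2 = 0 := by
      refine le_antisymm ?_ (Finset.sum_nonneg fun i _ => sq_nonneg _)
      exact nonpos_of_mul_nonpos_right hle (mul_pos hs ht)
    rw [Finset.sum_eq_zero_iff_of_nonneg (fun i _ => sq_nonneg _)] at h0
    funext i
    have hab : a i = b i := sub_eq_zero.1 (pow_eq_zero_iff two_ne_zero |>.1 (h0 i (Finset.mem_univ i)))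
    rw [hpi i, ← hab, ← add_mul, hst, one_mul]
end

section
/- Let y ∈ ℝ^n have nonnegative entries and let d ∈ ℝ^n have all entries strictly positive. Then there exists z ∈ ℝ^n with z ≺_d y such that every x ∈ ℝ^n with x ≺_d y satisfies x ≺ z (classical majorization); moreover z is unique up to permutation of its entries, i.e. if z' also has these two properties then z' is an entrywise permutation of z. -/
/-- Greedy optimality of a fractional threshold selection. -/
lemma greedy_le {n : ℕ} (y d m M : Fin n → ℝ) (hy : ∀ i, 0 ≤ y i) (hd : ∀ i, 0 < d i)
    (hm0 : ∀ i, 0 ≤ m i) (hm1 : ∀ i, m i ≤ 1) (hM0 : ∀ i, 0 ≤ M i) (hM1 : ∀ i, M i ≤ 1)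
    (hM : ∀ j j', y j' / d j' < y j / d j → M j = 1 ∨ M j' = 0)
    (hs : ∑ i, m i * d i ≤ ∑ i, M i * d i) : ∑ i, m i * y i ≤ ∑ i, M i * y i := by
  classical
  have key : ∃ l : ℝ, 0 ≤ l ∧ (∀ j, l < y j / d j → M j = 1) ∧ (∀ j, y j / d j < l → M j = 0) := by
    by_cases hne : (Finset.univ.filter (fun j => M j ≠ 1)).Nonempty
    · obtain ⟨j0, hj0, hmax⟩ := Finset.exists_max_image _ (fun j => y j / d j) hne
      refine ⟨y j0 / d j0, div_nonneg (hy _) (hd _).le, ?_, ?_⟩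
      · intro j hj
        by_contra h
        have := hmax j (by simpa using h)
        linarith
      · intro j hj
        rcases hM j0 j hj with h | h
        · exact absurd h (by simpa using hj0)
        · exact h
    · have hall : ∀ j, M j = 1 := by
        intro j
        by_contra h
        exact hne ⟨j, by simpa using h⟩
      refine ⟨0, le_rfl, fun j _ => hall j, ?_⟩
      intro j hj
      have := div_nonneg (hy j) (hd j).le
      linarith
  obtain ⟨l, hl, h1, h0⟩ := key
  have hterm : ∀ i, l * (M i * d i - m i * d i) ≤ M i * y i - m i * y i := by
    intro i
    have e : y i = y i / d i * d i := by field_simp [(hd i).ne']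
    have hdi := hd i
    have h0' := h0 i
    have h1' := h1 i
    generalize y i / d i = r at e h0' h1'
    have : 0 ≤ (M i - m i) * (r - l) := by
      rcases lt_trichotomy r l with hr | hr | hr
      · rw [h0' hr]
        nlinarith [mul_nonneg (hm0 i) (sub_pos.2 hr).le]
      · rw [hr, sub_self, mul_zero]
      · rw [h1' hr]
        exact mul_nonneg (sub_nonneg.2 (hm1 i)) (sub_pos.2 hr).le
    rw [e]
    nlinarith [mul_nonneg this hdi.le]
  have hsum := Finset.sum_le_sum (fun i (_ : i ∈ Finset.univ) => hterm i)
  rw [← Finset.mul_sum, Finset.sum_sub_distrib, Finset.sum_sub_distrib] at hsum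
  have := mul_nonneg hl (sub_nonneg.2 hs)
  linarith

/-- Filtered telescoping sum. -/
lemma telescope_ite (n k : ℕ) (G : ℕ → ℝ) :
    ∑ i : Fin n, (if i.val < k then G (i.val + 1) - G i.val else 0) = G (min k n) - G 0 := by
  induction n with
  | zero => simp
  | succ n ih =>
    rw [Fin.sum_univ_castSucc]
    simp only [Fin.val_castSucc, Fin.val_last, ih]
    split_ifs with h
    · rw [min_eq_right (by omega : n ≤ k), min_eq_right (by omega : n + 1 ≤ k)]; ring
    · rw [min_eq_left (by omega : k ≤ n), min_eq_left (by omega : k ≤ n + 1)]; ring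

/-- Cumulative sums. -/
lemma cumul {n : ℕ} (a : Fin n → ℝ) (ha : ∀ i, 0 ≤ a i) :
    ∃ D : ℕ → ℝ, D 0 = 0 ∧ Monotone D ∧ D n = ∑ i, a i ∧ ∀ i : Fin n, D (i.val + 1) - D i.val = a i := by
  refine ⟨fun k => ∑ i ∈ Finset.range k, if h : i < n then a ⟨i, h⟩ else 0, by simp, ?_, ?_, ?_⟩
  · refine monotone_nat_of_le_succ fun k => ?_
    rw [Finset.sum_range_succ]
    split_ifs with h
    · linarith [ha ⟨k, h⟩]
    · simp
  · simp only
    rw [Finset.sum_range]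
    simp
  · intro i
    simp [Finset.sum_range_succ]

/-- The north-west corner transport plan. -/
lemma transport_plan {n : ℕ} (a b : Fin n → ℝ) (ha : ∀ i, 0 ≤ a i) (hb : ∀ i, 0 ≤ b i)
    (hab : ∑ i, a i = ∑ i, b i) :
    ∃ C : Fin n → Fin n → ℝ, (∀ i j, 0 ≤ C i j) ∧ (∀ i, ∑ j, C i j = a i) ∧
      (∀ j, ∑ i, C i j = b j) ∧
      ∀ (k : ℕ) (j j' : Fin n), j < j' → (∑ i, if i.val < k then C i j else 0) = b j ∨
        (∑ i, if i.val < k then C i j' else 0) = 0 := by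
  obtain ⟨D, D0, Dm, Dn, Ds⟩ := cumul a ha
  obtain ⟨E, E0, Em, En, Es⟩ := cumul b hb
  have Dnn : ∀ k, 0 ≤ D k := fun k => D0 ▸ Dm (Nat.zero_le k)
  have Enn : ∀ k, 0 ≤ E k := fun k => E0 ▸ Em (Nat.zero_le k)
  have tel : ∀ (k : ℕ) (j : Fin n), (∑ i : Fin n, if i.val < k then
      ((min (D (i.val + 1)) (E (j.val + 1)) - min (D (i.val + 1)) (E j.val)) -
        (min (D i.val) (E (j.val + 1)) - min (D i.val) (E j.val))) else 0) =
      min (D (min k n)) (E (j.val + 1)) - min (D (min k n)) (E j.val) := by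
    intro k j
    rw [telescope_ite n k (fun k => min (D k) (E (j.val + 1)) - min (D k) (E j.val))]
    simp [D0, Enn]
  refine ⟨fun i j => ((min (D (i.val + 1)) (E (j.val + 1)) - min (D (i.val + 1)) (E j.val)) -
        (min (D i.val) (E (j.val + 1)) - min (D i.val) (E j.val))), ?_, ?_, ?_, ?_⟩
  · intro i j
    have h1 := Dm (Nat.le_succ i.val)
    have h2 := Em (Nat.le_succ j.val)
    simp only [Nat.succ_eq_add_one] at h1 h2
    simp only [min_def]
    split_ifs <;> linarith
  · intro i
    have h := telescope_ite n n (fun k => min (D (i.val + 1)) (E k) - min (D i.val) (E k))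
    have hn1 : D (i.val + 1) ≤ E n := by rw [En, ← hab, ← Dn]; exact Dm (by omega)
    have hn2 : D i.val ≤ E n := by rw [En, ← hab, ← Dn]; exact Dm (by omega)
    simp only [Fin.is_lt, if_true, min_self, E0, min_eq_left hn1, min_eq_left hn2,
      min_eq_right (Dnn _)] at h
    rw [← Ds i]
    rw [sub_self, sub_zero] at h
    rw [← h]
    exact Finset.sum_congr rfl fun j _ => by ring
  · intro j
    have h := tel n j
    simp only [Fin.is_lt, if_true, min_self] at h
    have hn1 : E (j.val + 1) ≤ D n := by rw [Dn, hab, ← En]; exact Em (by omega)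
    have hn2 : E j.val ≤ D n := by rw [Dn, hab, ← En]; exact Em (by omega)
    rw [h, min_eq_right hn1, min_eq_right hn2, Es]
  · intro k j j' hj
    rw [tel, tel]
    have h2 := Em (Nat.le_succ j.val)
    have h3 : E (j.val + 1) ≤ E j'.val := Em (by have := Fin.lt_def.1 hj; omega)
    have h4 := Em (Nat.le_succ j'.val)
    rcases le_total (E (j.val + 1)) (D (min k n)) with h | h
    · left
      rw [min_eq_right h, min_eq_right (h2.trans h), Es]
    · right
      rw [min_eq_left (h.trans h3), min_eq_left (h.trans (h3.trans h4)), sub_self]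

lemma exists_antitone {n : ℕ} (f : Fin n → ℝ) : ∃ σ : Equiv.Perm (Fin n), Antitone (f ∘ σ) := by
  refine ⟨Tuple.sort (fun i => - f i), fun i j h => ?_⟩
  have := Tuple.monotone_sort (fun i => - f i) h
  simpa using this

/-- Abel summation. -/
lemma abel_le {n : ℕ} (c w : Fin n → ℝ) (hc : Antitone c)
    (hw : ∀ k, (∑ i, if i.val < k then w i else 0) ≤ 0) (ht : ∑ i, w i = 0) :
    ∑ i, c i * w i ≤ 0 := by
  have main : ∀ (n : ℕ) (c w : Fin (n + 1) → ℝ), Antitone c →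
      (∀ k, (∑ i, if i.val < k then w i else 0) ≤ 0) →
      ∑ i, c i * w i ≤ c (Fin.last n) * ∑ i, w i := by
    intro n
    induction n with
    | zero => intro c w _ _; simp
    | succ n ih =>
      intro c w hc hw
      have h := ih (fun i => c i.castSucc) (fun i => w i.castSucc)
        (fun i j hij => hc (by simpa using hij)) (by
          intro k
          have := hw (min k (n + 1))
          rw [Fin.sum_univ_castSucc] at this
          refine le_of_eq_of_le ?_ this
          rw [if_neg (by simp), add_zero]
          refine Finset.sum_congr rfl fun i _ => ?_
          have hi := i.is_lt
          by_cases hik : i.val < k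
          · rw [if_pos hik, if_pos (by simp; omega)]
          · rw [if_neg hik, if_neg (by simp; omega)])
      have h0 := hw (n + 1)
      rw [Fin.sum_univ_castSucc] at h0 ⊢
      rw [if_neg (by simp), add_zero, Finset.sum_congr rfl
        (fun i _ => if_pos (by simpa using Nat.lt_succ_iff.1 i.is_lt))] at h0
      have hcc : c (Fin.last (n + 1)) ≤ c (Fin.last n).castSucc := hc (Fin.le_last _)
      rw [Fin.sum_univ_castSucc (f := w)]
      nlinarith [mul_nonneg (sub_nonneg.2 hcc) (neg_nonneg.2 h0)]
  cases n with
  | zero => simp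
  | succ n => simpa [ht] using main n c w hc hw

/-- Hardy–Littlewood–Polya. -/
lemma maj_of_partial {n : ℕ} (x z : Fin n → ℝ) (σ : Equiv.Perm (Fin n))
    (h : ∀ (ρ : Equiv.Perm (Fin n)) (k : ℕ), (∑ i, if i.val < k then x (ρ i) else 0) ≤
      ∑ i, if i.val < k then z (σ i) else 0) (ht : ∑ i, x i = ∑ i, z i) : Maj x z := by
  classical
  let L : Matrix (Fin n) (Fin n) ℝ →ₗ[ℝ] (Fin n → ℝ) := (Matrix.mulVecBilin ℝ ℝ).flip z
  have hL : ∀ A, L A = A.mulVec z := fun A => rfl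
  let K : Set (Fin n → ℝ) := L '' (doublyStochastic ℝ (Fin n) : Set (Matrix (Fin n) (Fin n) ℝ))
  have hK : K = convexHull ℝ (L '' {M | ∃ π : Equiv.Perm (Fin n), π.permMatrix ℝ = M}) := by
    simp only [K]
    rw [doublyStochastic_eq_convexHull_permMatrix, L.image_convexHull]
  have hKc : IsClosed K := by
    rw [hK]
    refine Set.Finite.isClosed_convexHull _ ?_
    refine Set.Finite.image _ ?_
    exact Set.finite_range (fun π : Equiv.Perm (Fin n) => π.permMatrix ℝ)
  have hKv : Convex ℝ K := by rw [hK]; exact convex_convexHull _ _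
  suffices hx : x ∈ K by
    obtain ⟨A, hA, rfl⟩ := hx
    rw [SetLike.mem_coe, mem_doublyStochastic_iff_sum] at hA
    exact ⟨A, hA.1, hA.2.2, hA.2.1, rfl⟩
  by_contra hx
  obtain ⟨f, u, hf, hu⟩ := geometric_hahn_banach_closed_point hKv hKc hx
  let c : Fin n → ℝ := fun i => f (Pi.single i 1)
  have hfc : ∀ v, f v = ∑ i, c i * v i := by
    intro v
    conv_lhs => rw [← Finset.univ_sum_single v]
    rw [map_sum]
    refine Finset.sum_congr rfl fun i _ => ?_
    have : (Pi.single i (v i) : Fin n → ℝ) = v i • Pi.single i 1 := by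
      rw [← Pi.single_smul]; simp
    rw [this, map_smul, smul_eq_mul, mul_comm]
  obtain ⟨ρ, hρ⟩ := exists_antitone c
  have ha : (fun i => z (σ (ρ.symm i))) ∈ K := by
    refine ⟨Equiv.Perm.permMatrix ℝ (ρ.symm.trans σ : Equiv.Perm (Fin n)), permMatrix_mem_doublyStochastic, ?_⟩
    rw [hL, Matrix.permMatrix_mulVec]
    rfl
  have h1 := hf _ ha
  rw [hfc] at h1 hu
  rw [← Equiv.sum_comp ρ] at h1 hu
  simp only [Equiv.symm_apply_apply] at h1
  have := abel_le (c ∘ ρ) (fun i => x (ρ i) - z (σ i)) hρ (by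
    intro k
    have := h ρ k
    rw [← sub_nonpos, ← Finset.sum_sub_distrib] at this
    refine le_of_eq_of_le (Finset.sum_congr rfl fun i _ => ?_) this
    split_ifs <;> simp) (by
    rw [Finset.sum_sub_distrib, Equiv.sum_comp ρ x, Equiv.sum_comp σ z, ht, sub_self])
  simp only [mul_sub, Finset.sum_sub_distrib, Function.comp] at this
  linarith

lemma sum_ite_mulVec {n : ℕ} (A : Matrix (Fin n) (Fin n) ℝ) (y : Fin n → ℝ)
    (ρ : Equiv.Perm (Fin n)) (k : ℕ) :
    (∑ i : Fin n, if i.val < k then A.mulVec y (ρ i) else 0) =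
      ∑ j, (∑ i : Fin n, if i.val < k then A (ρ i) j else 0) * y j := by
  simp only [Finset.sum_mul]
  rw [Finset.sum_comm]
  refine Finset.sum_congr rfl fun i _ => ?_
  split_ifs
  · rfl
  · simp

lemma sum_ite_bounds {n : ℕ} (A : Matrix (Fin n) (Fin n) ℝ) (h0 : ∀ i j, 0 ≤ A i j)
    (h1 : ∀ j, ∑ i, A i j = 1) (ρ : Equiv.Perm (Fin n)) (k : ℕ) (j : Fin n) :
    0 ≤ (∑ i : Fin n, if i.val < k then A (ρ i) j else 0) ∧
    (∑ i : Fin n, if i.val < k then A (ρ i) j else 0) ≤ 1 := by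
  constructor
  · refine Finset.sum_nonneg fun i _ => ?_
    split_ifs
    · exact h0 _ _
    · exact le_refl (0 : ℝ)
  · rw [← h1 j, ← Equiv.sum_comp ρ (fun i => A i j)]
    refine Finset.sum_le_sum fun i _ => ?_
    split_ifs
    · exact le_rfl
    · exact h0 _ _

/-- Partial sums of the antitone rearrangement dominate fractional selections. -/
lemma sorted_top {n : ℕ} (z m : Fin n → ℝ) (hz : ∀ i, 0 ≤ z i) (σ : Equiv.Perm (Fin n))
    (hσ : Antitone (z ∘ σ)) (k : ℕ) (hm0 : ∀ i, 0 ≤ m i) (hm1 : ∀ i, m i ≤ 1)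
    (hs : ∑ i, m i = ∑ i : Fin n, if i.val < k then 1 else 0) :
    ∑ i, m i * z i ≤ ∑ i : Fin n, if i.val < k then z (σ i) else 0 := by
  have h := greedy_le z (fun _ => 1) m (fun j => if (σ.symm j).val < k then 1 else 0) hz
    (fun _ => (one_pos : (0:ℝ) < 1)) hm0 hm1 (fun i => by positivity) (fun i => by split_ifs <;> simp) (by
      intro j j' hj
      simp only [div_one] at hj
      by_contra! hcon
      obtain ⟨ha, hb⟩ := hcon
      have ha' : ¬ (σ.symm j).val < k := fun h => ha (if_pos h)
      have hb' : (σ.symm j').val < k := by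
        by_contra h
        exact hb (if_neg h)
      have := hσ (show σ.symm j' ≤ σ.symm j from Fin.le_def.2 (by omega))
      simp at this
      linarith) (by
      simp only [mul_one]
      rw [hs, ← Equiv.sum_comp σ (fun j => if (σ.symm j).val < k then (1:ℝ) else 0)]
      simp)
  refine h.trans_eq ?_
  rw [← Equiv.sum_comp σ]
  simp

lemma maj_partial {n : ℕ} {x z : Fin n → ℝ} (hz : ∀ i, 0 ≤ z i) (σ : Equiv.Perm (Fin n))
    (hσ : Antitone (z ∘ σ)) (hx : Maj x z) (ρ : Equiv.Perm (Fin n)) (k : ℕ) :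
    (∑ i : Fin n, if i.val < k then x (ρ i) else 0) ≤
      ∑ i : Fin n, if i.val < k then z (σ i) else 0 := by
  obtain ⟨A, h0, h1, h2, rfl⟩ := hx
  rw [sum_ite_mulVec]
  refine sorted_top z _ hz σ hσ k (fun j => (sum_ite_bounds A h0 h1 ρ k j).1)
    (fun j => (sum_ite_bounds A h0 h1 ρ k j).2) ?_
  rw [Finset.sum_comm]
  refine Finset.sum_congr rfl fun i _ => ?_
  split_ifs
  · exact h2 _
  · simp

lemma perm_of_maj {n : ℕ} {z z' : Fin n → ℝ} (hz : ∀ i, 0 ≤ z i) (hz' : ∀ i, 0 ≤ z' i)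
    (h : Maj z z') (h' : Maj z' z) : ∃ σ : Equiv.Perm (Fin n), z' = fun i => z (σ i) := by
  obtain ⟨σ, hσ⟩ := exists_antitone z
  obtain ⟨τ, hτ⟩ := exists_antitone z'
  have heq : ∀ k : ℕ, (∑ i : Fin n, if i.val < k then z (σ i) else 0) =
      ∑ i : Fin n, if i.val < k then z' (τ i) else 0 := fun k =>
    le_antisymm (maj_partial hz' τ hτ h σ k) (maj_partial hz σ hσ h' τ k)
  have hdiff : ∀ (v : Fin n → ℝ) (j : Fin n), v j =
      (∑ i : Fin n, if i.val < j.val + 1 then v i else 0) -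
      ∑ i : Fin n, if i.val < j.val then v i else 0 := by
    intro v j
    rw [← Finset.sum_sub_distrib, Finset.sum_eq_single j]
    · simp
    · intro b _ hb
      have : b.val ≠ j.val := fun h => hb (Fin.ext h)
      by_cases hlt : b.val < j.val
      · rw [if_pos hlt, if_pos (by omega), sub_self]
      · rw [if_neg hlt, if_neg (by omega), sub_self]
    · simp
  refine ⟨τ.symm.trans σ, funext fun i => ?_⟩
  have h1 := hdiff (fun i => z (σ i)) (τ.symm i)
  have h2 := hdiff (fun i => z' (τ i)) (τ.symm i)
  simp only [heq] at h1
  simp only [Equiv.apply_symm_apply] at h2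
  rw [h2, ← h1]
  rfl

lemma dmaj_nonneg {n : ℕ} {d x y : Fin n → ℝ} (hy : ∀ i, 0 ≤ y i) (h : DMaj d x y) (i : Fin n) :
    0 ≤ x i := by
  obtain ⟨A, hA, rfl⟩ := h
  simp only [Matrix.mulVec, dotProduct]
  exact Finset.sum_nonneg fun j _ => mul_nonneg (hA.1 i j) (hy j)

lemma dmaj_sum {n : ℕ} {d x y : Fin n → ℝ} (h : DMaj d x y) : ∑ i, x i = ∑ i, y i := by
  obtain ⟨A, hA, rfl⟩ := h
  simp only [Matrix.mulVec, dotProduct]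
  rw [Finset.sum_comm]
  refine Finset.sum_congr rfl fun j _ => ?_
  rw [← Finset.sum_mul, hA.2.1, one_mul]

theorem stmt18 {n : ℕ} (y d : Fin n → ℝ) (hy : ∀ i, 0 ≤ y i) (hd : ∀ i, 0 < d i) :
    ∃ z : Fin n → ℝ, DMaj d z y ∧ (∀ x, DMaj d x y → Maj x z) ∧
      ∀ z' : Fin n → ℝ, DMaj d z' y → (∀ x, DMaj d x y → Maj x z') →
        ∃ σ : Equiv.Perm (Fin n), z' = fun i => z (σ i) := by
  suffices hex : ∃ z : Fin n → ℝ, DMaj d z y ∧ (∀ x, DMaj d x y → Maj x z) by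
    obtain ⟨z, hz, hmax⟩ := hex
    exact ⟨z, hz, hmax, fun z' hz' hmax' =>
      perm_of_maj (dmaj_nonneg hy hz) (dmaj_nonneg hy hz') (hmax' z hz) (hmax z' hz')⟩
  obtain ⟨σ, hσ⟩ := exists_antitone d
  obtain ⟨τ, hτ⟩ := exists_antitone (fun i => y i / d i)
  obtain ⟨C, hC0, hCr, hCc, hCk⟩ := transport_plan (d ∘ σ) (d ∘ τ) (fun i => (hd _).le)
    (fun i => (hd _).le) (by simp only [Function.comp]; rw [Equiv.sum_comp σ d, Equiv.sum_comp τ d])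
  let B : Matrix (Fin n) (Fin n) ℝ := fun i j => C (σ.symm i) (τ.symm j) / d j
  have hB : IsDStochastic d B := by
    refine ⟨fun i j => div_nonneg (hC0 _ _) (hd _).le, fun j => ?_, funext fun i => ?_⟩
    · simp only [B]
      rw [← Finset.sum_div, Equiv.sum_comp σ.symm (fun i => C i (τ.symm j)), hCc]
      simp [(hd j).ne']
    · simp only [B, Matrix.mulVec, dotProduct]
      rw [Finset.sum_congr rfl (fun j _ => div_mul_cancel₀ _ (hd j).ne'),
        Equiv.sum_comp τ.symm (fun j => C (σ.symm i) j), hCr]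
      simp
  have hzd : DMaj d (B.mulVec y) y := ⟨B, hB, rfl⟩
  refine ⟨B.mulVec y, hzd, fun x hx => ?_⟩
  refine maj_of_partial x _ σ (fun ρ k => ?_) (by rw [dmaj_sum hx, dmaj_sum hzd])
  obtain ⟨A, hA, rfl⟩ := hx
  rw [sum_ite_mulVec, sum_ite_mulVec]
  have bA := sum_ite_bounds A hA.1 hA.2.1 ρ k
  have bB := sum_ite_bounds B hB.1 hB.2.1 σ k
  refine greedy_le y d _ _ hy hd (fun j => (bA j).1) (fun j => (bA j).2) (fun j => (bB j).1)
    (fun j => (bB j).2) ?_ ?_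
  · intro j j' hj
    have hlt : τ.symm j < τ.symm j' := by
      by_contra h
      have := hτ (not_lt.1 h)
      simp at this
      linarith
    have e : ∀ j, (∑ i : Fin n, if i.val < k then B (σ i) j else 0) =
        (∑ i : Fin n, if i.val < k then C i (τ.symm j) else 0) / d j := by
      intro j
      rw [Finset.sum_div]
      refine Finset.sum_congr rfl fun i _ => ?_
      simp only [B, Equiv.symm_apply_apply]
      split_ifs <;> simp
    rw [e, e]
    rcases hCk k _ _ hlt with h | h
    · left
      rw [h]
      simp [(hd j).ne']
    · right
      rw [h, zero_div]
  · rw [← sum_ite_mulVec, ← sum_ite_mulVec, hA.2.2, hB.2.2]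
    have := sorted_top d (fun j => if (ρ.symm j).val < k then 1 else 0) (fun i => (hd i).le) σ hσ k
      (fun i => by positivity) (fun i => by split_ifs <;> simp) (by
        rw [← Equiv.sum_comp ρ]
        simp)
    rw [← Equiv.sum_comp ρ] at this
    simpa using this
end

section
/- Let y ∈ ℝ^n have nonnegative entries and let d ∈ ℝ^n have all entries strictly positive. Suppose y/d and d are similarly ordered, i.e. there exists a permutation σ of {1,…,n} with d_{σ(1)} ≥ … ≥ d_{σ(n)} and y_{σ(1)}/d_{σ(1)} ≥ … ≥ y_{σ(n)}/d_{σ(n)}. Then every x ∈ ℝ^n with x ≺_d y satisfies x ≺ y (classical majorization). -/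
theorem knap_aux {n : ℕ} (k : ℕ) (e r c : Fin n → ℝ) (he : ∀ i, 0 ≤ e i) (hr : Antitone r)
    (hr0 : ∀ i, 0 ≤ r i) (hc0 : ∀ i, 0 ≤ c i) (hc1 : ∀ i, c i ≤ 1)
    (hs : ∑ j, c j * e j ≤ ∑ j, if j.val < k then e j else 0) :
    ∑ j, c j * (e j * r j) ≤ ∑ j, if j.val < k then e j * r j else 0 := by
  obtain ⟨t, ht0, ht1, ht2⟩ : ∃ t : ℝ, 0 ≤ t ∧ (∀ j : Fin n, j.val < k → t ≤ r j) ∧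
      (∀ j : Fin n, k ≤ j.val → r j ≤ t) := by
    by_cases hk : k < n
    · refine ⟨r ⟨k, hk⟩, hr0 _, fun j hj => hr ?_, fun j hj => hr ?_⟩
      · exact Fin.le_def.2 hj.le
      · exact Fin.le_def.2 hj
    · exact ⟨0, le_rfl, fun j _ => hr0 j, fun j hj => absurd j.isLt (by omega)⟩
  have h1 : ∀ j : Fin n, c j * (e j * r j) - t * (c j * e j) ≤
      (if j.val < k then e j * r j else 0) - t * (if j.val < k then e j else 0) := by
    intro j
    split_ifs with h
    · nlinarith [mul_nonneg (mul_nonneg (sub_nonneg.2 (hc1 j)) (he j)) (sub_nonneg.2 (ht1 j h))]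
    · nlinarith [mul_nonneg (mul_nonneg (hc0 j) (he j)) (sub_nonneg.2 (ht2 j (not_lt.1 h)))]
  have h2 := Finset.sum_le_sum (fun j (_ : j ∈ Finset.univ) => h1 j)
  rw [Finset.sum_sub_distrib, Finset.sum_sub_distrib, ← Finset.mul_sum, ← Finset.mul_sum] at h2
  nlinarith [mul_le_mul_of_nonneg_left hs ht0]

theorem abel_aux : ∀ (n : ℕ) (f Z : Fin n → ℝ) (c : ℝ), Antitone f → (∀ i, c ≤ f i) →
    (∀ k : ℕ, 0 ≤ ∑ i, if i.val < k then Z i else 0) → c * ∑ i, Z i ≤ ∑ i, f i * Z i := by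
  intro n
  induction n with
  | zero => intros; simp
  | succ n ih =>
    intro f Z c hf hc hk
    have h1 := ih (fun i => f i.castSucc) (fun i => Z i.castSucc) (f (Fin.last n))
      (fun i j h => hf (by simpa using h)) (fun i => hf (Fin.le_last _)) (by
        intro k
        have := hk (min k n)
        rw [Fin.sum_univ_castSucc] at this
        simpa using this)
    have h2 := hk (n + 1)
    have h3 : (∑ i : Fin (n + 1), if i.val < n + 1 then Z i else 0) = ∑ i, Z i :=
      Finset.sum_congr rfl fun i _ => if_pos i.isLt
    rw [h3] at h2
    have h4 := mul_le_mul_of_nonneg_right (hc (Fin.last n)) h2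
    refine h4.trans ?_
    rw [Fin.sum_univ_castSucc, Fin.sum_univ_castSucc]
    linarith

theorem partial_aux {n : ℕ} (y d : Fin n → ℝ) (hy : ∀ i, 0 ≤ y i) (hd : ∀ i, 0 < d i)
    (σ τ : Equiv.Perm (Fin n)) (hdσ : Antitone fun i => d (σ i))
    (hyd : Antitone fun i => y (σ i) / d (σ i)) (A : Matrix (Fin n) (Fin n) ℝ)
    (hA : IsDStochastic d A) (k : ℕ) :
    (∑ i : Fin n, if i.val < k then A.mulVec y (τ i) else 0) ≤
      ∑ i : Fin n, if i.val < k then y (σ i) else 0 := by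
  obtain ⟨h0, h1, h2⟩ := hA
  set c : Fin n → ℝ := fun j => ∑ i : Fin n, if i.val < k then A (τ i) (σ j) else 0 with hc
  have key : ∀ v : Fin n → ℝ, (∑ i : Fin n, if i.val < k then A.mulVec v (τ i) else 0) =
      ∑ j, c j * v (σ j) := by
    intro v
    simp only [hc, Finset.sum_mul]
    rw [Finset.sum_comm]
    refine Finset.sum_congr rfl fun i _ => ?_
    split_ifs
    · simp only [Matrix.mulVec, dotProduct]
      exact (Equiv.sum_comp σ (fun j => A (τ i) j * v j)).symm
    · simp
  have hc0 : ∀ j, 0 ≤ c j := fun j => Finset.sum_nonneg fun i _ => by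
    split_ifs
    · exact h0 _ _
    · exact le_rfl
  have hc1 : ∀ j, c j ≤ 1 := fun j => by
    rw [← h1 (σ j), ← Equiv.sum_comp τ]
    refine Finset.sum_le_sum fun i _ => ?_
    split_ifs
    · exact le_rfl
    · exact h0 _ _
  have hdd : (∑ i : Fin n, if i.val < k then d (τ i) else 0) ≤
      ∑ i : Fin n, if i.val < k then d (σ i) else 0 := by
    have := knap_aux k (fun _ => 1) (fun i => d (σ i))
      (fun j => if (τ.symm (σ j)).val < k then 1 else 0) (fun _ => zero_le_one) hdσ
      (fun i => (hd _).le) (fun j => by split_ifs <;> norm_num)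
      (fun j => by split_ifs <;> norm_num) (by
        simp only [mul_one]
        exact ((Equiv.sum_comp (σ.trans τ.symm)
          (fun j : Fin n => if j.val < k then (1 : ℝ) else 0))).le)
    simp only [one_mul, ite_mul, zero_mul] at this
    refine le_trans (le_of_eq ?_) this
    rw [← Equiv.sum_comp (σ.trans τ.symm)]
    simp
  have h3 := key d
  rw [h2] at h3
  rw [h3] at hdd
  have := knap_aux k (fun i => d (σ i)) (fun i => y (σ i) / d (σ i)) c (fun i => (hd _).le) hyd
    (fun i => div_nonneg (hy _) (hd _).le) hc0 hc1 hdd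
  have h5 : ∀ i, d (σ i) * (y (σ i) / d (σ i)) = y (σ i) := fun i =>
    mul_div_cancel₀ _ (hd _).ne'
  simp only [h5] at this
  rw [key y]
  exact this

theorem convex_maj {n : ℕ} (y : Fin n → ℝ) : Convex ℝ {x | Maj x y} := by
  rintro x ⟨A, a0, a1, a2, rfl⟩ z ⟨B, b0, b1, b2, rfl⟩ s t hs ht hst
  refine ⟨s • A + t • B, fun i j => ?_, fun j => ?_, fun i => ?_, ?_⟩
  · exact add_nonneg (mul_nonneg hs (a0 i j)) (mul_nonneg ht (b0 i j))
  · simp [Finset.sum_add_distrib, ← Finset.mul_sum, a1, b1, hst]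
  · simp [Finset.sum_add_distrib, ← Finset.mul_sum, a2, b2, hst]
  · rw [Matrix.add_mulVec, Matrix.smul_mulVec, Matrix.smul_mulVec]

theorem perm_maj {n : ℕ} (y : Fin n → ℝ) (π : Equiv.Perm (Fin n)) :
    Maj (fun i => y (π i)) y := by
  refine ⟨fun i j => if π i = j then 1 else 0, fun i j => ?_, fun j => ?_, fun i => ?_, ?_⟩
  · dsimp only
    split_ifs <;> norm_num
  · rw [Equiv.sum_comp π (fun i => if i = j then (1 : ℝ) else 0)]
    simp
  · simp
  · ext i
    simp [Matrix.mulVec, dotProduct]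

theorem stmt19 {n : ℕ} (y d : Fin n → ℝ) (hy : ∀ i, 0 ≤ y i) (hd : ∀ i, 0 < d i)
    (σ : Equiv.Perm (Fin n)) (hdσ : Antitone fun i => d (σ i))
    (hyd : Antitone fun i => y (σ i) / d (σ i)) :
    ∀ x : Fin n → ℝ, DMaj d x y → Maj x y := by
  rintro x ⟨A, hA, rfl⟩
  let S : Set (Fin n → ℝ) := Set.range fun π : Equiv.Perm (Fin n) => fun i => y (π i)
  have hS : convexHull ℝ S ⊆ {x | Maj x y} := by
    refine convexHull_min ?_ (convex_maj y)
    rintro _ ⟨π, rfl⟩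
    exact perm_maj y π
  refine hS ?_
  by_contra hx
  have hcl : IsClosed (convexHull ℝ S) := Set.Finite.isClosed_convexHull ℝ (Set.finite_range _)
  obtain ⟨f, u, hf1, hf2⟩ := geometric_hahn_banach_closed_point (convex_convexHull ℝ S) hcl hx
  set w : Fin n → ℝ := fun i => f (Pi.single i 1) with hw
  have hfw : ∀ v, f v = ∑ i, w i * v i := by
    intro v
    conv_lhs => rw [pi_eq_sum_univ' v]
    rw [map_sum]
    refine Finset.sum_congr rfl fun i _ => ?_
    rw [map_smul, smul_eq_mul, mul_comm, hw]
  set τ := Tuple.sort (fun i => - w i) with hτ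
  have hm : Antitone fun i => w (τ i) := fun i j h => by
    have := Tuple.monotone_sort (fun i => - w i) h
    simpa using this
  obtain ⟨c, hc⟩ := (Set.finite_range fun i => w (τ i)).bddBelow
  have ab := abel_aux n (fun i => w (τ i)) (fun i => y (σ i) - A.mulVec y (τ i)) c hm
    (fun i => hc ⟨i, rfl⟩) (fun k => by
      have := partial_aux y d hy hd σ τ hdσ hyd A hA k
      rw [← sub_nonneg, ← Finset.sum_sub_distrib] at this
      refine this.trans (le_of_eq (Finset.sum_congr rfl fun i _ => ?_))
      split_ifs <;> simp)
  have htot : ∑ i, (y (σ i) - A.mulVec y (τ i)) = 0 := by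
    rw [Finset.sum_sub_distrib, Equiv.sum_comp σ y, Equiv.sum_comp τ (A.mulVec y)]
    simp only [Matrix.mulVec, dotProduct]
    rw [Finset.sum_comm]
    simp [← Finset.sum_mul, hA.2.1]
  rw [htot, mul_zero] at ab
  simp only [mul_sub, Finset.sum_sub_distrib] at ab
  rw [Equiv.sum_comp τ (fun i => w i * A.mulVec y i), ← hfw] at ab
  have h3 := hf1 (fun i => y ((τ.symm.trans σ) i)) (subset_convexHull ℝ S ⟨τ.symm.trans σ, rfl⟩)
  rw [hfw, ← Equiv.sum_comp τ] at h3
  simp only [Equiv.trans_apply, Equiv.symm_apply_apply] at h3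
  linarith
end
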